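/- arXiv:1907.07376 — 3 statements merged into one kernel-verified Lean document; each statement's English description precedes it below -/
import Mathlib

section
/- Let G = (V,E) be a connected multigraph, U a clique of G, M = E_G(U) the set of edges with exactly one end in U, and N ⊆ E(G − U). Suppose each component of G[M] is a star with its center in V − U (equivalently, each vertex of U is incident with at most one edge of M). Let G•U be the graph obtained from G by contracting all edges of G[U], with u the vertex of G•U resulting from U. Then τ_G(M ∪ N) = |U|^{|U| − 2 − |M|} · Σ_{T ∈ ST_{G•U}(N)} |U|^{|E_T(u)|}, where ST_{G•U}(N) is the set of spanning trees of G•U containing all edges of N and E_T(u) is the set of edges of T incident with u. -/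
/-!
Spanning trees of multigraphs: common definitions.

A multigraph on a vertex type `V` with edge type `E` is given by an incidence
map `inc : E → Sym2 V` sending each edge to its (unordered) pair of endpoints.
-/

namespace PaperST

universe u v

/-- A multigraph on vertex type `V` with edge type `E`. -/
structure Multigraph (V : Type u) (E : Type v) where
  /-- the two (possibly equal) endpoints of each edge -/
  inc : E → Sym2 V

namespace Multigraph

variable {V : Type u} {E : Type v}

/-- One step along an edge of `T`. -/
def Step (G : Multigraph V E) (T : Set E) (u v : V) : Prop :=
  ∃ e ∈ T, G.inc e = s(u, v)

theorem step_symm (G : Multigraph V E) (T : Set E) : Symmetric (G.Step T) := by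
  rintro u v ⟨e, he, hinc⟩
  exact ⟨e, he, by rw [hinc]; exact Sym2.eq_swap⟩

/-- Reachability using only edges in `T`. -/
def Reach (G : Multigraph V E) (T : Set E) : V → V → Prop :=
  Relation.ReflTransGen (G.Step T)

/-- The spanning subgraph `G⟨T⟩` is connected. -/
def ConnectedOn (G : Multigraph V E) (T : Set E) : Prop :=
  ∀ u v : V, G.Reach T u v

/-- `G` is connected. -/
def Connected (G : Multigraph V E) : Prop :=
  G.ConnectedOn Set.univ

/-- `G` has no loops. -/
def Loopless (G : Multigraph V E) : Prop :=
  ∀ e : E, ¬ (G.inc e).IsDiag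

/-- A spanning tree of a (finite) multigraph: a connected spanning subgraph
with `|V| - 1` edges. -/
def IsSpanningTree (G : Multigraph V E) (T : Set E) : Prop :=
  G.ConnectedOn T ∧ T.ncard + 1 = Nat.card V

/-- The set `ST_G(M)` of spanning trees of `G` containing all edges of `M`. -/
def ST (G : Multigraph V E) (M : Set E) : Set (Set E) :=
  {T | G.IsSpanningTree T ∧ M ⊆ T}

/-- `τ_G(M)`: the number of spanning trees of `G` containing all edges of `M`. -/
noncomputable def tau (G : Multigraph V E) (M : Set E) : ℕ :=
  (G.ST M).ncard

/-- The spanning subgraph `G⟨W⟩` is a forest (no cycles): there are no loops in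
`W` and every edge of `W` is a bridge of `G⟨W⟩`. -/
def IsForest (G : Multigraph V E) (W : Set E) : Prop :=
  ∀ e ∈ W, ¬ (G.inc e).IsDiag ∧
    ∀ u v : V, G.inc e = s(u, v) → ¬ G.Reach (W \ {e}) u v

/-- Edges with all endpoints in `U`: the edge set of the induced subgraph `G[U]`. -/
def edgesWithin (G : Multigraph V E) (U : Set V) : Set E :=
  {e | ∀ v ∈ G.inc e, v ∈ U}

/-- `E_G(U₁, U₂)`: edges with one end in `U₁` and the other end in `U₂`. -/
def edgesBetween (G : Multigraph V E) (U₁ U₂ : Set V) : Set E :=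
  {e | ∃ u v, G.inc e = s(u, v) ∧ u ∈ U₁ ∧ v ∈ U₂}

/-- `E_G(U) = E_G(U, V − U)`: edges with one end in `U` and the other outside. -/
def edgeBoundary (G : Multigraph V E) (U : Set V) : Set E :=
  G.edgesBetween U Uᶜ

/-- `U` is a clique of `G`: the induced subgraph `G[U]` is a complete graph,
i.e. exactly one edge joins each pair of distinct vertices of `U`, and there
are neither loops nor parallel edges inside `U`. -/
def IsClique (G : Multigraph V E) (U : Set V) : Prop :=
  (∀ u ∈ U, ∀ v ∈ U, u ≠ v → ∃! e : E, G.inc e = s(u, v)) ∧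
    ∀ e ∈ G.edgesWithin U, ¬ (G.inc e).IsDiag

/-- The degree of a vertex: the number of edges incident with it. -/
noncomputable def degree (G : Multigraph V E) (v : V) : ℕ :=
  {e : E | v ∈ G.inc e}.ncard

/-- The vertices incident with some edge of `W`: the vertex set of `G[W]`. -/
def supp (G : Multigraph V E) (W : Set E) : Set V :=
  {v | ∃ e ∈ W, v ∈ G.inc e}

/-- Edges `e` and `f` lie in the same component of `G[W]`. -/
def EdgeConn (G : Multigraph V E) (W : Set E) (e f : E) : Prop :=
  ∃ u v : V, u ∈ G.inc e ∧ v ∈ G.inc f ∧ G.Reach W u v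

/-- Every component of `G[W]` is a star whose center lies in `C`. -/
def StarComponents (G : Multigraph V E) (W : Set E) (C : Set V) : Prop :=
  ∀ e ∈ W, ∃ w ∈ C, ∀ f ∈ W, G.EdgeConn W e f →
    (w ∈ G.inc f ∧ ¬ (G.inc f).IsDiag ∧
      ∀ g ∈ W, G.EdgeConn W e g → G.inc g = G.inc f → g = f)

/-- The setoid on `V` identifying the vertices connected by edges of `W`. -/
def contractSetoid (G : Multigraph V E) (W : Set E) : Setoid V where
  r := G.Reach W
  iseqv := ⟨fun _ => Relation.ReflTransGen.refl,
    fun h => (@Relation.ReflTransGen.symmetric _ _ ⟨fun _ _ h' => G.step_symm W h'⟩).symm _ _ h,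
    fun h h' => Relation.ReflTransGen.trans h h'⟩

/-- The contraction `G/W` of the edges in `W`. -/
def contract (G : Multigraph V E) (W : Set E) :
    Multigraph (Quotient (G.contractSetoid W)) {e : E // e ∉ W} :=
  ⟨fun e => (G.inc e.val).map (Quotient.mk (G.contractSetoid W))⟩

/-- Deletion `G − D` of the edges in `D`. -/
def deleteEdges (G : Multigraph V E) (D : Set E) : Multigraph V {e : E // e ∉ D} :=
  ⟨fun e => G.inc e.val⟩

/-- The closed neighbourhood `N_G[S]`. -/
def closedNbhd (G : Multigraph V E) (S : Set V) : Set V :=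
  S ∪ {v | ∃ u ∈ S, ∃ e : E, G.inc e = s(u, v)}

/-- The induced subgraph `G[A]`, described using a choice `ends` of the pair of
endpoints of each edge. -/
def induce (G : Multigraph V E) (A : Set V) (ends : E → V × V)
    (hends : ∀ e, G.inc e = s((ends e).1, (ends e).2)) :
    Multigraph A {e : E // e ∈ G.edgesWithin A} :=
  ⟨fun e => s(⟨(ends e.val).1, e.prop _ (by rw [hends]; exact Sym2.mem_mk_left _ _)⟩,
              ⟨(ends e.val).2, e.prop _ (by rw [hends]; exact Sym2.mem_mk_right _ _)⟩)⟩

end Multigraph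


namespace Multigraph
open Classical Finset

universe u1 u2 u3 u4

theorem reach_symm {V : Type u1} {E : Type u2} (G : Multigraph V E) {T : Set E} {x y : V}
    (h : G.Reach T x y) : G.Reach T y x :=
  (G.contractSetoid T).iseqv.symm h

theorem reach_mono {V : Type u1} {E : Type u2} (G : Multigraph V E) {S T : Set E} (hST : S ⊆ T)
    {x y : V} (h : G.Reach S x y) : G.Reach T x y := by
  induction h with
  | refl => exact Relation.ReflTransGen.refl
  | tail _ hs ih =>
    obtain ⟨e, he, hi⟩ := hs
    exact ih.tail ⟨e, hST he, hi⟩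

theorem reach_step {V : Type u1} {E : Type u2} (G : Multigraph V E) {T : Set E} {x y : V} {e : E}
    (he : e ∈ T) (hi : G.inc e = s(x, y)) : G.Reach T x y :=
  Relation.ReflTransGen.single ⟨e, he, hi⟩

/-- pull back along an edge map, push forward along a vertex map -/
def pull {V : Type u1} {E : Type u2} {I : Type u3} {E' : Type u4} (G : Multigraph V E)
    (π : V → I) (ι : E' → E) : Multigraph I E' :=
  ⟨fun e => (G.inc (ι e)).map π⟩

theorem pull_connected {V : Type u1} {E : Type u2} {I : Type u3} {E' : Type u4}
    (G : Multigraph V E) (π : V → I) (ι : E' → E) (F : Set E)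
    (hsurj : Function.Surjective π)
    (h1 : ∀ e ∈ F, ∀ x y, G.inc e = s(x, y) → π x = π y)
    (h2 : ∀ x y, π x = π y → G.Reach F x y) (S : Set E') :
    (G.pull π ι).ConnectedOn S ↔ G.ConnectedOn (F ∪ ι '' S) := by
  constructor
  · intro h x y
    have key : ∀ i j, (G.pull π ι).Reach S i j → ∀ x y, π x = i → π y = j →
        G.Reach (F ∪ ι '' S) x y := by
      intro i j hij
      induction hij with
      | refl =>
        intro x y hx hy
        exact G.reach_mono Set.subset_union_left (h2 x y (hx.trans hy.symm))
      | @tail b c _ hs ih =>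
        intro x y hx hy
        obtain ⟨e, he, hi⟩ := hs
        have hi' : (G.inc (ι e)).map π = s(b, c) := hi
        obtain ⟨p, q, hpq⟩ : ∃ p q, G.inc (ι e) = s(p, q) := by
          induction G.inc (ι e) using Sym2.ind with
          | _ p q => exact ⟨p, q, rfl⟩
        have hmem : ι e ∈ F ∪ ι '' S := Or.inr ⟨e, he, rfl⟩
        rw [hpq, Sym2.map_mk, Sym2.eq_iff] at hi'
        rcases hi' with ⟨hb, hc⟩ | ⟨hc, hb⟩
        · exact ((ih x p hx hb).trans (G.reach_step hmem hpq)).trans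
            (G.reach_mono Set.subset_union_left (h2 q y (hc.trans hy.symm)))
        · exact ((ih x q hx hb).trans (G.reach_step hmem (hpq.trans Sym2.eq_swap))).trans
            (G.reach_mono Set.subset_union_left (h2 p y (hc.trans hy.symm)))
    exact key _ _ (h (π x) (π y)) x y rfl rfl
  · intro h i j
    obtain ⟨x, rfl⟩ := hsurj i
    obtain ⟨y, rfl⟩ := hsurj j
    have hxy := h x y
    induction hxy with
    | refl => exact Relation.ReflTransGen.refl
    | @tail b c _ hs ih =>
      obtain ⟨e, he, hi⟩ := hs
      rcases he with he | ⟨e', he', rfl⟩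
      · rw [← h1 e he b c hi]; exact ih
      · refine ih.tail ⟨e', he', ?_⟩
        show (G.inc (ι e')).map π = _
        rw [hi, Sym2.map_mk]

theorem card_le_of_connected {V : Type u1} {E : Type u2} [Finite V] [Finite E]
    (G : Multigraph V E) (T : Set E) (h : G.ConnectedOn T) : Nat.card V ≤ T.ncard + 1 := by
  by_cases hne : Nonempty V
  swap
  · rw [not_nonempty_iff] at hne
    simp
  let A : SimpleGraph V := SimpleGraph.fromRel (G.Step T)
  have hA : A.Connected := by
    refine { preconnected := fun x y => ?_, nonempty := hne }
    have := h x y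
    induction this with
    | refl => exact SimpleGraph.Reachable.refl _
    | @tail b c _ hs ih =>
      by_cases hbc : b = c
      · rw [← hbc]; exact ih
      · exact ih.trans (SimpleGraph.Adj.reachable (by
          rw [SimpleGraph.fromRel_adj]; exact ⟨hbc, Or.inl hs⟩))
  have h1 := hA.card_vert_le_card_edgeSet_add_one
  have h2 : A.edgeSet ⊆ G.inc '' T := by
    intro z
    induction z using Sym2.ind with
    | _ x y =>
      rw [SimpleGraph.mem_edgeSet, SimpleGraph.fromRel_adj]
      rintro ⟨_, ⟨e, he, hi⟩ | ⟨e, he, hi⟩⟩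
      · exact ⟨e, he, hi⟩
      · exact ⟨e, he, hi.trans Sym2.eq_swap⟩
  have h3 : A.edgeSet.ncard ≤ T.ncard :=
    (Set.ncard_le_ncard h2 (Set.toFinite _)).trans (Set.ncard_image_le (Set.toFinite _))
  rw [Nat.card_coe_set_eq] at h1
  omega

theorem card_le_of_comps {V : Type u1} {E : Type u2} {I : Type u3} [Finite V] [Finite E]
    [Finite I] (G : Multigraph V E) (π : V → I) (hsurj : Function.Surjective π) (T : Set E)
    (h2 : ∀ x y, π x = π y → G.Reach T x y) : Nat.card V ≤ T.ncard + Nat.card I := by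
  obtain ⟨r, hr⟩ := hsurj.hasRightInverse
  let H : Multigraph (Option V) (T ⊕ I) :=
    ⟨Sum.elim (fun e => (G.inc e).map some) (fun i => s(none, some (r i)))⟩
  have key : ∀ x y, G.Reach T x y → H.Reach Set.univ (some x) (some y) := by
    intro x y h
    induction h with
    | refl => exact Relation.ReflTransGen.refl
    | @tail b c _ hs ih =>
      obtain ⟨e, he, hi⟩ := hs
      refine ih.tail ⟨Sum.inl ⟨e, he⟩, trivial, ?_⟩
      show (G.inc e).map some = _
      rw [hi, Sym2.map_mk]
  have hn : ∀ z, H.Reach Set.univ none z := by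
    intro z
    cases z with
    | none => exact Relation.ReflTransGen.refl
    | some x =>
      exact (H.reach_step (T := Set.univ) (e := Sum.inr (π x)) (Set.mem_univ _) rfl).trans
        (key _ _ (h2 _ _ (hr (π x))))
  have := H.card_le_of_connected Set.univ (fun x y => (H.reach_symm (hn x)).trans (hn y))
  rw [Set.ncard_univ, Nat.card_sum, Finite.card_option, Nat.card_coe_set_eq] at this
  omega

theorem tree_no_loop {V : Type u1} {E : Type u2} [Finite V] [Finite E]
    (G : Multigraph V E) (T : Set E) (h : G.IsSpanningTree T) (e : E) (he : e ∈ T) :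
    ¬ (G.inc e).IsDiag := by
  intro hd
  have hc : G.ConnectedOn (T \ {e}) := by
    intro x y
    have := h.1 x y
    induction this with
    | refl => exact Relation.ReflTransGen.refl
    | @tail b c _ hs ih =>
      obtain ⟨f, hf, hi⟩ := hs
      by_cases hfe : f = e
      · subst hfe
        rw [hi, Sym2.mk_isDiag_iff] at hd
        rw [← hd]; exact ih
      · exact ih.tail ⟨f, ⟨hf, hfe⟩, hi⟩
  have h1 := G.card_le_of_connected _ hc
  have h2 := Set.ncard_sdiff_singleton_add_one he (Set.toFinite _)
  have h3 := h.2
  omega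

noncomputable def trees {V : Type u1} {E : Type u2} [Fintype E] (G : Multigraph V E) :
    Finset (Set E) := Finset.univ.filter fun T => G.IsSpanningTree T

theorem mem_trees {V : Type u1} {E : Type u2} [Fintype E] (G : Multigraph V E) (T : Set E) :
    T ∈ G.trees ↔ G.IsSpanningTree T := by simp [trees]

theorem exists_ends {V : Type u1} (z : Sym2 V) : ∃ x y, z = s(x, y) := by
  induction z using Sym2.ind with
  | _ p q => exact ⟨p, q, rfl⟩

theorem pull_mult {V : Type u1} {E : Type u2} {I : Type u3} [Fintype V] [Fintype E]
    (G : Multigraph V E) (w : V → ℕ) (π : V → I)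
    (h : ∀ x y, x ≠ y → (univ.filter fun e => G.inc e = s(x, y)).card = w x * w y)
    (a b : I) (hab : a ≠ b) :
    (univ.filter fun e => (G.pull π id).inc e = s(a, b)).card =
      (∑ x with π x = a, w x) * (∑ y with π y = b, w y) := by
  rw [Finset.sum_mul_sum, ← Finset.sum_product']
  have hU : (univ.filter fun e => (G.pull π id).inc e = s(a, b)) =
      ((univ.filter fun x => π x = a) ×ˢ (univ.filter fun y => π y = b)).biUnion
        fun p => univ.filter fun e => G.inc e = s(p.1, p.2) := by
    ext e
    simp only [mem_filter, mem_univ, true_and, mem_biUnion, mem_product, Prod.exists]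
    show (G.inc e).map π = _ ↔ _
    obtain ⟨x, y, hxy⟩ := exists_ends (G.inc e)
    constructor
    · intro he
      rw [hxy, Sym2.map_mk, Sym2.eq_iff] at he
      rcases he with ⟨h1, h2⟩ | ⟨h1, h2⟩
      · exact ⟨x, y, ⟨h1, h2⟩, hxy⟩
      · exact ⟨y, x, ⟨h2, h1⟩, hxy.trans Sym2.eq_swap⟩
    · rintro ⟨p, q, ⟨rfl, rfl⟩, hpq⟩
      rw [hpq, Sym2.map_mk]
  rw [hU, Finset.card_biUnion]
  · refine Finset.sum_congr rfl ?_
    rintro ⟨x, y⟩ hp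
    simp only [mem_filter, mem_univ, true_and, mem_product] at hp
    refine h x y ?_
    rintro rfl
    exact hab (hp.1.symm.trans hp.2)
  · rintro ⟨x, y⟩ hp ⟨x', y'⟩ hp' hne
    simp only [mem_filter, mem_univ, true_and, coe_product, Set.mem_prod, mem_coe] at hp hp'
    rw [Function.onFun, Finset.disjoint_left]
    intro e he he'
    simp only [mem_filter, mem_univ, true_and] at he he'
    rw [he, Sym2.eq_iff] at he'
    rcases he' with ⟨rfl, rfl⟩ | ⟨rfl, rfl⟩
    · exact hne rfl
    · exact hab (hp.1.symm.trans hp'.2)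

/-- merge `j` into `i` -/
noncomputable def merge {I : Type u1} (i j : I) (hij : i ≠ j) (l : I) : {l : I // l ≠ j} :=
  if h : l = j then ⟨i, hij⟩ else ⟨l, h⟩

theorem merge_self {I : Type u1} (i j : I) (hij : i ≠ j) : merge i j hij j = ⟨i, hij⟩ := by
  simp [merge]

theorem merge_ne {I : Type u1} (i j : I) (hij : i ≠ j) (l : I) (h : l ≠ j) :
    merge i j hij l = ⟨l, h⟩ := by
  simp [merge, h]

theorem merge_trees {I : Type u1} {E : Type u2} [Fintype I] [Fintype E]
    (H : Multigraph I E) (i j : I) (hij : i ≠ j) (e : E) (he : H.inc e = s(i, j)) :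
    (H.trees.filter fun T => e ∈ T).card = (H.pull (merge i j hij) id).trees.card := by
  have hcard : Nat.card {l : I // l ≠ j} + 1 = Nat.card I := by
    have := Fintype.card_subtype_compl (fun l : I => l = j)
    have h0 : 0 < Fintype.card I := Fintype.card_pos_iff.2 ⟨i⟩
    rw [Nat.card_eq_fintype_card, Nat.card_eq_fintype_card]
    simp only [Fintype.card_subtype_eq] at this
    have h3 : Fintype.card {l : I // l ≠ j} = Fintype.card {l : I // ¬ l = j} := rfl
    omega
  have hmm : merge i j hij i = merge i j hij j := by rw [merge_self, merge_ne i j hij i hij]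
  have hconn : ∀ T : Set E, (H.pull (merge i j hij) id).ConnectedOn T ↔
      H.ConnectedOn ({e} ∪ T) := by
    intro T
    have := H.pull_connected (merge i j hij) id {e} (fun l => ⟨l.1, merge_ne i j hij l.1 l.2⟩)
      (by
        rintro f hf x y hxy
        rw [Set.mem_singleton_iff] at hf
        subst hf
        rw [he, Sym2.eq_iff] at hxy
        rcases hxy with ⟨rfl, rfl⟩ | ⟨rfl, rfl⟩
        · exact hmm
        · exact hmm.symm)
      (by
        intro x y hxy
        have hr : H.Reach {e} i j := H.reach_step rfl he
        by_cases hx : x = j <;> by_cases hy : y = j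
        · rw [hx, hy]; exact Relation.ReflTransGen.refl
        · subst hx
          rw [merge_self, merge_ne _ _ _ _ hy, Subtype.mk.injEq] at hxy
          rw [← hxy]; exact H.reach_symm hr
        · subst hy
          rw [merge_self, merge_ne _ _ _ _ hx, Subtype.mk.injEq] at hxy
          rw [hxy]; exact hr
        · rw [merge_ne _ _ _ _ hx, merge_ne _ _ _ _ hy, Subtype.mk.injEq] at hxy
          rw [hxy]; exact Relation.ReflTransGen.refl) T
    rwa [Set.image_id] at this
  refine Finset.card_bij' (fun T _ => T \ {e}) (fun T _ => insert e T) ?_ ?_ ?_ ?_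
  · intro T hT
    rw [mem_filter, mem_trees] at hT
    rw [mem_trees]
    refine ⟨(hconn _).2 ?_, ?_⟩
    · rw [Set.union_sdiff_self, Set.singleton_union, Set.insert_eq_of_mem hT.2]
      exact hT.1.1
    · have h1 := hT.1.2
      have h2 := Set.ncard_sdiff_singleton_add_one hT.2 (Set.toFinite _)
      omega
  · intro T hT
    rw [mem_trees] at hT
    have heT : e ∉ T := by
      intro heT
      refine tree_no_loop _ T hT e heT ?_
      show ((H.inc e).map _).IsDiag
      rw [he, Sym2.map_mk, Sym2.mk_isDiag_iff]
      exact hmm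
    rw [mem_filter, mem_trees]
    refine ⟨⟨?_, ?_⟩, Set.mem_insert _ _⟩
    · rw [← Set.singleton_union]; exact (hconn _).1 hT.1
    · rw [Set.ncard_insert_of_notMem heT (Set.toFinite _), hT.2, hcard]
  · intro T hT
    rw [mem_filter] at hT
    simp [Set.insert_eq_of_mem hT.2]
  · intro T hT
    rw [mem_trees] at hT
    have heT : e ∉ T := by
      intro heT
      refine tree_no_loop _ T hT e heT ?_
      show ((H.inc e).map _).IsDiag
      rw [he, Sym2.map_mk, Sym2.mk_isDiag_iff]
      exact hmm
    simp [heT]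

theorem merge_prod {I : Type u1} [Fintype I] (i j : I) (hij : i ≠ j) (w : I → ℕ) :
    w i * w j * ∏ a, (∑ x with merge i j hij x = a, w x) = (w i + w j) * ∏ a, w a := by
  have h1 : ∑ x with merge i j hij x = ⟨i, hij⟩, w x = w i + w j := by
    have : (univ.filter fun x => merge i j hij x = ⟨i, hij⟩) = {i, j} := by
      ext x
      by_cases hx : x = j
      · subst hx; simp [merge_self]
      · simp [merge_ne _ _ _ _ hx, hx]
    rw [this, Finset.sum_pair hij]
  have h2 : ∀ a : {l : I // l ≠ j}, a ≠ ⟨i, hij⟩ → ∑ x with merge i j hij x = a, w x = w a := by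
    rintro ⟨a, ha⟩ hai
    have : (univ.filter fun x => merge i j hij x = ⟨a, ha⟩) = {a} := by
      ext x
      by_cases hx : x = j
      · subst hx
        simp only [mem_filter, mem_univ, true_and, merge_self, mem_singleton]
        exact ⟨fun h => absurd h.symm hai, fun h => absurd h.symm ha⟩
      · simp [merge_ne _ _ _ _ hx]
    rw [this, Finset.sum_singleton]
  rw [← Finset.mul_prod_erase univ _ (mem_univ (⟨i, hij⟩ : {l : I // l ≠ j})), h1,
    Finset.prod_congr rfl (fun a ha => h2 a (Finset.ne_of_mem_erase ha))]
  have h3 : ∏ a, w a = w j * (w i * ∏ a ∈ univ.erase (⟨i, hij⟩ : {l : I // l ≠ j}), w a) := by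
    have h4 := Finset.mul_prod_erase univ (fun a : {l : I // l ≠ j} => w a)
      (mem_univ (⟨i, hij⟩ : {l : I // l ≠ j}))
    simp only at h4
    rw [h4, ← Finset.mul_prod_erase univ w (mem_univ j)]
    congr 1
    refine (Finset.prod_subtype _ ?_ _)
    simp
  rw [h3]; ring

theorem core (c : ℕ) : ∀ (I : Type u1) (E : Type u2) [Fintype I] [Fintype E]
    (H : Multigraph I E) (w : I → ℕ), Fintype.card I = c + 1 →
    (∀ x y, x ≠ y → (univ.filter fun e => H.inc e = s(x, y)).card = w x * w y) →
    H.trees.card * (∑ i, w i) ^ 2 = (∑ i, w i) ^ (c + 1) * ∏ i, w i := by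
  induction c with
  | zero =>
    intro I E _ _ H w hI hw
    obtain ⟨i, hi⟩ := Fintype.card_eq_one_iff.1 hI
    have hu : (univ : Finset I) = {i} := by ext x; simp [hi x]
    have ht : H.trees = {∅} := by
      ext T
      rw [mem_trees, mem_singleton]
      constructor
      · intro h
        have h2 := h.2
        rw [Nat.card_eq_fintype_card, hI] at h2
        exact (Set.ncard_eq_zero (Set.toFinite _)).1 (by omega)
      · rintro rfl
        refine ⟨fun x y => ?_, by simp [hI]⟩
        rw [hi x, hi y]; exact Relation.ReflTransGen.refl
    rw [ht, hu]; simp; ring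
  | succ c ih =>
    intro I E _ _ H w hI hw
    set n := ∑ i, w i with hn
    -- triple count
    have hA : ∀ T ∈ H.trees, ∑ p : I × I with p.1 ≠ p.2,
        (univ.filter fun e => H.inc e = s(p.1, p.2) ∧ e ∈ T).card = 2 * (c + 1) := by
      intro T hT
      rw [mem_trees] at hT
      have hTc : (univ.filter fun e => e ∈ T).card = c + 1 := by
        have h2 := hT.2
        rw [Nat.card_eq_fintype_card, hI, Set.ncard_eq_toFinset_card'] at h2
        have : (univ.filter fun e => e ∈ T) = T.toFinset := by ext; simp
        rw [this]; omega
      simp_rw [Finset.card_filter]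
      rw [Finset.sum_comm]
      have : ∀ e, (∑ p : I × I with p.1 ≠ p.2, if H.inc e = s(p.1, p.2) ∧ e ∈ T then 1 else 0)
          = if e ∈ T then 2 else 0 := by
        intro e
        by_cases he : e ∈ T
        · have hl := H.tree_no_loop T hT e he
          obtain ⟨x, y, hxy⟩ := exists_ends (H.inc e)
          rw [hxy, Sym2.mk_isDiag_iff] at hl
          simp only [he, and_true, if_true]
          rw [← Finset.card_filter, Finset.filter_filter]
          have : (univ.filter fun p : I × I => p.1 ≠ p.2 ∧ H.inc e = s(p.1, p.2)) =
              {(x, y), (y, x)} := by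
            ext ⟨a, b⟩
            simp only [mem_filter, mem_univ, true_and, hxy, Sym2.eq_iff, mem_insert,
              mem_singleton, Prod.mk.injEq]
            constructor
            · rintro ⟨_, ⟨rfl, rfl⟩ | ⟨rfl, rfl⟩⟩ <;> simp
            · rintro (⟨rfl, rfl⟩ | ⟨rfl, rfl⟩)
              · exact ⟨hl, by simp⟩
              · exact ⟨fun h => hl h.symm, by simp⟩
          rw [this, Finset.card_pair]
          simp [hl]
        · simp [he]
      simp_rw [this]
      rw [← Finset.sum_filter, Finset.sum_const, hTc, smul_eq_mul]
      ring
    have hB : ∀ p : I × I, p.1 ≠ p.2 →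
        (∑ T ∈ H.trees, (univ.filter fun e => H.inc e = s(p.1, p.2) ∧ e ∈ T).card) * n ^ 2 =
          n ^ (c + 1) * ((w p.1 + w p.2) * ∏ a, w a) := by
      rintro ⟨i, j⟩ hij
      simp only at hij ⊢
      have h1 : (∑ T ∈ H.trees, (univ.filter fun e => H.inc e = s(i, j) ∧ e ∈ T).card) =
          ∑ e with H.inc e = s(i, j), (H.trees.filter fun T => e ∈ T).card := by
        simp_rw [Finset.card_filter]
        rw [Finset.sum_comm, Finset.sum_filter]
        refine Finset.sum_congr rfl fun e _ => ?_
        by_cases h : H.inc e = s(i, j) <;> simp [h]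
      rw [h1, Finset.sum_congr rfl (fun e he => H.merge_trees i j hij e (mem_filter.1 he).2),
        Finset.sum_const, hw i j hij, smul_eq_mul, ← merge_prod i j hij w]
      have h2 := ih {l : I // l ≠ j} E (H.pull (merge i j hij) id)
        (fun a => ∑ x with merge i j hij x = a, w x) (by
          have := Fintype.card_subtype_compl (fun l : I => l = j)
          simp only [Fintype.card_subtype_eq] at this
          have h3 : Fintype.card {l : I // l ≠ j} = Fintype.card {l : I // ¬ l = j} := rfl
          omega) (fun a b hab => by
            convert H.pull_mult w (merge i j hij) hw a b hab)
      have h3 : (∑ a, ∑ x with merge i j hij x = a, w x) = n := Finset.sum_fiberwise _ _ _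
      rw [h3] at h2
      rw [mul_assoc, h2]; ring
    have hC : ∑ p : I × I with p.1 ≠ p.2, (w p.1 + w p.2) = 2 * (c + 1) * n := by
      have h1 : ∑ p : I × I, (w p.1 + w p.2) = 2 * (c + 2) * n := by
        rw [Fintype.sum_prod_type]
        simp only [Finset.sum_add_distrib, Finset.sum_const, Finset.card_univ, hI, smul_eq_mul,
          ← Finset.mul_sum, ← hn]
        ring
      have h2 : ∑ p : I × I with ¬ p.1 ≠ p.2, (w p.1 + w p.2) = 2 * n := by
        rw [Finset.sum_filter, Fintype.sum_prod_type]
        simp only [ne_eq, not_not, Finset.sum_ite_eq, mem_univ, if_true]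
        rw [Finset.sum_add_distrib, ← hn]; ring
      have h3 := Finset.sum_filter_add_sum_filter_not univ (fun p : I × I => p.1 ≠ p.2)
        (fun p => w p.1 + w p.2)
      rw [h1, h2] at h3
      nlinarith
    have hD : 2 * (c + 1) * (H.trees.card * n ^ 2) =
        2 * (c + 1) * (n ^ (c + 1 + 1) * ∏ i, w i) := by
      calc 2 * (c + 1) * (H.trees.card * n ^ 2)
          = (∑ T ∈ H.trees, 2 * (c + 1)) * n ^ 2 := by
            rw [Finset.sum_const, smul_eq_mul]; ring
        _ = (∑ T ∈ H.trees, ∑ p : I × I with p.1 ≠ p.2,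
              (univ.filter fun e => H.inc e = s(p.1, p.2) ∧ e ∈ T).card) * n ^ 2 := by
            rw [Finset.sum_congr rfl (fun T hT => (hA T hT).symm)]
        _ = ∑ p : I × I with p.1 ≠ p.2, (∑ T ∈ H.trees,
              (univ.filter fun e => H.inc e = s(p.1, p.2) ∧ e ∈ T).card) * n ^ 2 := by
            rw [Finset.sum_comm, Finset.sum_mul]
        _ = ∑ p : I × I with p.1 ≠ p.2, n ^ (c + 1) * ((w p.1 + w p.2) * ∏ a, w a) :=
            Finset.sum_congr rfl (fun p hp => hB p (mem_filter.1 hp).2)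
        _ = _ := by
            rw [← Finset.mul_sum, ← Finset.sum_mul, hC]; ring
    exact Nat.eq_of_mul_eq_mul_left (by positivity) hD

theorem star_trees {Q : Type u1} {E : Type u2} [Fintype Q] [Fintype E] (g : E → Q)
    (H : Multigraph (Option Q) E) (hH : ∀ e, H.inc e = s(none, some (g e))) :
    H.trees.card = ∏ q, (univ.filter fun e => g e = q).card := by
  rw [← Fintype.card_piFinset]
  symm
  refine Finset.card_bij (fun s _ => Set.range s) ?_ ?_ ?_
  · intro s hs
    rw [Fintype.mem_piFinset] at hs
    have hs' : ∀ q, g (s q) = q := fun q => (mem_filter.1 (hs q)).2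
    have hinj : Function.Injective s := Function.LeftInverse.injective hs'
    rw [mem_trees]
    have hn : ∀ z, H.Reach (Set.range s) none z := by
      intro z
      cases z with
      | none => exact Relation.ReflTransGen.refl
      | some q => exact H.reach_step ⟨q, rfl⟩ (by rw [hH, hs'])
    refine ⟨fun x y => (H.reach_symm (hn x)).trans (hn y), ?_⟩
    rw [Finite.card_option, ← Set.image_univ, Set.ncard_image_of_injective _ hinj,
      Set.ncard_univ]
  · intro s hs t ht hst
    rw [Fintype.mem_piFinset] at hs ht
    have hs' : ∀ q, g (s q) = q := fun q => (mem_filter.1 (hs q)).2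
    have ht' : ∀ q, g (t q) = q := fun q => (mem_filter.1 (ht q)).2
    funext q
    have : s q ∈ Set.range t := hst ▸ ⟨q, rfl⟩
    obtain ⟨q', hq'⟩ := this
    have h1 := ht' q'
    rw [hq', hs'] at h1
    rw [← hq', h1]
  · intro T hT
    rw [mem_trees] at hT
    have hsur : ∀ q, ∃ e ∈ T, g e = q := by
      intro q
      have h := hT.1 none (some q)
      rcases Relation.ReflTransGen.cases_tail h with h | ⟨b, _, e, he, hi⟩
      · cases h
      · rw [hH, Sym2.eq_iff] at hi
        rcases hi with ⟨_, h⟩ | ⟨h, _⟩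
        · exact ⟨e, he, Option.some.inj h⟩
        · cases h
    choose s hs1 hs2 using hsur
    have hinj : Function.Injective s := Function.LeftInverse.injective hs2
    refine ⟨s, ?_, ?_⟩
    · rw [Fintype.mem_piFinset]; intro q; simp [hs2]
    · refine Set.eq_of_subset_of_ncard_le ?_ ?_ (Set.toFinite _)
      · rintro _ ⟨q, rfl⟩; exact hs1 q
      · have h2 := hT.2
        rw [Finite.card_option] at h2
        rw [← Set.image_univ, Set.ncard_image_of_injective _ hinj, Set.ncard_univ]
        omega

theorem lift_count {V : Type u1} {E : Type u2} {I : Type u3} {E' : Type u4} [Fintype E]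
    [Fintype E'] (G : Multigraph V E) (H : Multigraph I E') (ι : E' → E)
    (hι : Function.Injective ι) (F : Set E) (hF : ∀ e, ι e ∉ F)
    (hconn : ∀ S, H.ConnectedOn S ↔ G.ConnectedOn (F ∪ ι '' S))
    (hcard : F.ncard + Nat.card I = Nat.card V) :
    (univ.filter fun T => G.IsSpanningTree T ∧ F ⊆ T ∧ T ⊆ F ∪ Set.range ι).card =
      H.trees.card := by
  have hdis : ∀ S : Set E', (F ∪ ι '' S).ncard = F.ncard + S.ncard := by
    intro S
    rw [Set.ncard_union_eq _ (Set.toFinite _) (Set.toFinite _),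
      Set.ncard_image_of_injective _ hι]
    rw [Set.disjoint_left]
    rintro _ h ⟨e, _, rfl⟩
    exact hF e h
  have hback : ∀ T : Set E, F ⊆ T → T ⊆ F ∪ Set.range ι → F ∪ ι '' (ι ⁻¹' T) = T := by
    intro T h1 h2
    ext e
    constructor
    · rintro (h | ⟨e', h, rfl⟩)
      · exact h1 h
      · exact h
    · intro h
      rcases h2 h with h' | ⟨e', rfl⟩
      · exact Or.inl h'
      · exact Or.inr ⟨e', h, rfl⟩
  refine Finset.card_bij' (fun T _ => ι ⁻¹' T) (fun S _ => F ∪ ι '' S) ?_ ?_ ?_ ?_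
  · intro T hT
    obtain ⟨hT, h1, h2⟩ := (mem_filter.1 hT).2
    rw [mem_trees]
    have hb := hback T h1 h2
    refine ⟨(hconn _).2 (by rw [hb]; exact hT.1), ?_⟩
    have h3 := hdis (ι ⁻¹' T)
    rw [hb] at h3
    have := hT.2
    omega
  · intro S hS
    rw [mem_trees] at hS
    refine mem_filter.2 ⟨mem_univ _, ⟨(hconn _).1 hS.1, ?_⟩, Set.subset_union_left, ?_⟩
    · rw [hdis, ← hcard, ← hS.2]; omega
    · exact Set.union_subset_union_right _ (Set.image_subset_range _ _)
  · intro T hT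
    obtain ⟨hT, h1, h2⟩ := (mem_filter.1 hT).2
    exact hback T h1 h2
  · intro S hS
    ext e
    constructor
    · rintro (h | ⟨e', h, h'⟩)
      · exact absurd h (hF e)
      · rwa [← hι h']
    · intro h; exact Or.inr ⟨e, h, rfl⟩

theorem lift_zero {V : Type u1} {E : Type u2} {I : Type u3} {E' : Type u4} [Fintype E] [Finite I]
    [Fintype E'] (G : Multigraph V E) (H : Multigraph I E') (ι : E' → E)
    (hι : Function.Injective ι) (F : Set E) (hF : ∀ e, ι e ∉ F)
    (hconn : ∀ S, H.ConnectedOn S ↔ G.ConnectedOn (F ∪ ι '' S))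
    (hcard : Nat.card V < F.ncard + Nat.card I) :
    (univ.filter fun T => G.IsSpanningTree T ∧ F ⊆ T ∧ T ⊆ F ∪ Set.range ι) = ∅ := by
  rw [Finset.filter_eq_empty_iff]
  rintro T _ ⟨hT, h1, h2⟩
  have hb : F ∪ ι '' (ι ⁻¹' T) = T := by
    ext e
    constructor
    · rintro (h | ⟨e', h, rfl⟩)
      · exact h1 h
      · exact h
    · intro h
      rcases h2 h with h' | ⟨e', rfl⟩
      · exact Or.inl h'
      · exact Or.inr ⟨e', h, rfl⟩
  have hdis : (F ∪ ι '' (ι ⁻¹' T)).ncard = F.ncard + (ι ⁻¹' T).ncard := by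
    rw [Set.ncard_union_eq _ (Set.toFinite _) (Set.toFinite _),
      Set.ncard_image_of_injective _ hι]
    rw [Set.disjoint_left]
    rintro _ h ⟨e, _, rfl⟩
    exact hF e h
  have h3 := H.card_le_of_connected (ι ⁻¹' T) ((hconn _).2 (by rw [hb]; exact hT.1))
  rw [hb] at hdis
  have := hT.2
  omega

/-- contraction of `M ∪ R` -/
noncomputable def pi1 {V : Type u1} {A : Type u2} {Q : Type u3} (U : Set V) (φ : A → V)
    (ψ : A → {v : V // v ∉ U}) (ρ : {v : V // v ∉ U} → Q) (v : V) :
    Q ⊕ {u : V // u ∈ U ∧ ∀ a, φ a ≠ u} :=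
  if h : v ∈ U then
    (if h' : ∃ a, φ a = v then Sum.inl (ρ (ψ h'.choose))
      else Sum.inr ⟨v, h, fun a ha => h' ⟨a, ha⟩⟩)
  else Sum.inl (ρ ⟨v, h⟩)

theorem pi1_out {V : Type u1} {A : Type u2} {Q : Type u3} (U : Set V) (φ : A → V)
    (ψ : A → {v : V // v ∉ U}) (ρ : {v : V // v ∉ U} → Q) (v : V) (h : v ∉ U) :
    pi1 U φ ψ ρ v = Sum.inl (ρ ⟨v, h⟩) := by
  simp [pi1, h]

theorem pi1_phi {V : Type u1} {A : Type u2} {Q : Type u3} (U : Set V) (φ : A → V)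
    (ψ : A → {v : V // v ∉ U}) (ρ : {v : V // v ∉ U} → Q) (hφ : Function.Injective φ)
    (hφU : ∀ a, φ a ∈ U) (a : A) :
    pi1 U φ ψ ρ (φ a) = Sum.inl (ρ (ψ a)) := by
  have h' : ∃ b, φ b = φ a := ⟨a, rfl⟩
  have h2 : h'.choose = a := hφ h'.choose_spec
  rw [pi1, dif_pos (hφU a), dif_pos h', h2]

theorem pi1_free {V : Type u1} {A : Type u2} {Q : Type u3} (U : Set V) (φ : A → V)
    (ψ : A → {v : V // v ∉ U}) (ρ : {v : V // v ∉ U} → Q) (u : V) (hu : u ∈ U)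
    (h : ∀ a, φ a ≠ u) :
    pi1 U φ ψ ρ u = Sum.inr ⟨u, hu, h⟩ := by
  have h' : ¬ ∃ b, φ b = u := fun ⟨b, hb⟩ => h b hb
  rw [pi1, dif_pos hu, dif_neg h']

/-- contraction of `E[U] ∪ R` -/
noncomputable def pi2 {V : Type u1} {Q : Type u3} (U : Set V)
    (ρ : {v : V // v ∉ U} → Q) (v : V) : Option Q :=
  if h : v ∈ U then none else some (ρ ⟨v, h⟩)

section setup

variable {V : Type u1} {E : Type u2} {Q : Type u3}

theorem pi1_conn (G : Multigraph V E) (U : Set V)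
    (M : Set E) (φ : {e // e ∈ M} → V) (ψ : {e // e ∈ M} → {v : V // v ∉ U})
    (hφ : Function.Injective φ) (hφU : ∀ a, φ a ∈ U)
    (hinc : ∀ a : {e // e ∈ M}, G.inc a = s(φ a, (ψ a).1))
    (R : Set E) (hR : R ⊆ G.edgesWithin Uᶜ)
    (ρ : {v : V // v ∉ U} → Q) (hρs : Function.Surjective ρ)
    (hρ : ∀ x y, ρ x = ρ y ↔ G.Reach R x y) :
    Function.Surjective (pi1 U φ ψ ρ) ∧
    (∀ e ∈ M ∪ R, ∀ x y, G.inc e = s(x, y) → pi1 U φ ψ ρ x = pi1 U φ ψ ρ y) ∧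
    (∀ x y, pi1 U φ ψ ρ x = pi1 U φ ψ ρ y → G.Reach (M ∪ R) x y) := by
  refine ⟨?_, ?_, ?_⟩
  · rintro (q | ⟨u, hu, h⟩)
    · obtain ⟨w, rfl⟩ := hρs q
      exact ⟨w.1, pi1_out U φ ψ ρ w.1 w.2⟩
    · exact ⟨u, pi1_free U φ ψ ρ u hu h⟩
  · rintro e (he | he) x y hxy
    · have h1 := hinc ⟨e, he⟩
      have h2 : pi1 U φ ψ ρ (φ ⟨e, he⟩) = pi1 U φ ψ ρ (ψ ⟨e, he⟩).1 := by
        rw [pi1_phi U φ ψ ρ hφ hφU, pi1_out U φ ψ ρ _ (ψ ⟨e, he⟩).2]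
      simp only at h1
      rw [h1, Sym2.eq_iff] at hxy
      rcases hxy with ⟨rfl, rfl⟩ | ⟨rfl, rfl⟩
      · exact h2
      · exact h2.symm
    · have hx : x ∉ U := hR he x (by rw [hxy]; exact Sym2.mem_mk_left _ _)
      have hy : y ∉ U := hR he y (by rw [hxy]; exact Sym2.mem_mk_right _ _)
      rw [pi1_out U φ ψ ρ x hx, pi1_out U φ ψ ρ y hy, (hρ ⟨x, hx⟩ ⟨y, hy⟩).2
        (G.reach_step he hxy)]
  · have key : ∀ x q, pi1 U φ ψ ρ x = Sum.inl q → ∃ w : {v : V // v ∉ U}, ρ w = q ∧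
        G.Reach (M ∪ R) x w := by
      intro x q h
      by_cases hx : x ∈ U
      · by_cases h' : ∃ a, φ a = x
        · obtain ⟨a, rfl⟩ := h'
          rw [pi1_phi U φ ψ ρ hφ hφU] at h
          exact ⟨ψ a, Sum.inl.inj h, G.reach_step (Or.inl a.2) (hinc a)⟩
        · rw [pi1_free U φ ψ ρ x hx (fun a ha => h' ⟨a, ha⟩)] at h
          cases h
      · rw [pi1_out U φ ψ ρ x hx] at h
        exact ⟨⟨x, hx⟩, Sum.inl.inj h, Relation.ReflTransGen.refl⟩
    have key2 : ∀ x u, pi1 U φ ψ ρ x = Sum.inr u → x = u.1 := by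
      intro x u h
      by_cases hx : x ∈ U
      · by_cases h' : ∃ a, φ a = x
        · obtain ⟨a, rfl⟩ := h'
          rw [pi1_phi U φ ψ ρ hφ hφU] at h
          cases h
        · rw [pi1_free U φ ψ ρ x hx (fun a ha => h' ⟨a, ha⟩)] at h
          rw [← Sum.inr.inj h]
      · rw [pi1_out U φ ψ ρ x hx] at h
        cases h
    intro x y hxy
    rcases hy : pi1 U φ ψ ρ y with q | u
    · obtain ⟨w, hw, hr⟩ := key y q hy
      obtain ⟨w', hw', hr'⟩ := key x q (hxy.trans hy)
      exact (hr'.trans (G.reach_mono Set.subset_union_right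
        ((hρ w' w).1 (hw'.trans hw.symm)))).trans (G.reach_symm hr)
    · rw [key2 y u hy, key2 x u (hxy.trans hy)]
      exact Relation.ReflTransGen.refl

theorem pi2_conn (G : Multigraph V E) (U : Set V) (hU : G.IsClique U) (u₀ : V) (hu₀ : u₀ ∈ U)
    (R : Set E) (hR : R ⊆ G.edgesWithin Uᶜ)
    (ρ : {v : V // v ∉ U} → Q) (hρs : Function.Surjective ρ)
    (hρ : ∀ x y, ρ x = ρ y ↔ G.Reach R x y) :
    Function.Surjective (pi2 U ρ) ∧
    (∀ e ∈ G.edgesWithin U ∪ R, ∀ x y, G.inc e = s(x, y) → pi2 U ρ x = pi2 U ρ y) ∧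
    (∀ x y, pi2 U ρ x = pi2 U ρ y → G.Reach (G.edgesWithin U ∪ R) x y) := by
  refine ⟨?_, ?_, ?_⟩
  · rintro (_ | q)
    · exact ⟨u₀, by simp [pi2, hu₀]⟩
    · obtain ⟨w, rfl⟩ := hρs q
      exact ⟨w.1, by simp [pi2, w.2]⟩
  · rintro e (he | he) x y hxy
    · have hx : x ∈ U := he x (by rw [hxy]; exact Sym2.mem_mk_left _ _)
      have hy : y ∈ U := he y (by rw [hxy]; exact Sym2.mem_mk_right _ _)
      simp [pi2, hx, hy]
    · have hx : x ∉ U := hR he x (by rw [hxy]; exact Sym2.mem_mk_left _ _)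
      have hy : y ∉ U := hR he y (by rw [hxy]; exact Sym2.mem_mk_right _ _)
      simp only [pi2, hx, hy, dif_neg, not_false_eq_true]
      rw [(hρ ⟨x, hx⟩ ⟨y, hy⟩).2 (G.reach_step he hxy)]
  · intro x y hxy
    by_cases hx : x ∈ U <;> by_cases hy : y ∈ U
    · by_cases h : x = y
      · rw [h]; exact Relation.ReflTransGen.refl
      · obtain ⟨e, he, _⟩ := hU.1 x hx y hy h
        refine G.reach_step (Or.inl ?_) he
        intro v hv
        rw [he, Sym2.mem_iff] at hv
        rcases hv with rfl | rfl <;> assumption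
    · simp [pi2, hx, hy] at hxy
    · simp [pi2, hx, hy] at hxy
    · simp only [pi2, hx, hy, dif_neg, not_false_eq_true] at hxy
      exact G.reach_mono Set.subset_union_right
        ((hρ ⟨x, hx⟩ ⟨y, hy⟩).1 (Option.some.inj hxy))

theorem clique_count [Fintype V] [Fintype E] [Fintype Q] (G : Multigraph V E) (U : Set V)
    (hU : G.IsClique U) (u₀ : V) (hu₀ : u₀ ∈ U)
    (M : Set E) (φ : {e // e ∈ M} → V) (ψ : {e // e ∈ M} → {v : V // v ∉ U})
    (hφ : Function.Injective φ) (hφU : ∀ a, φ a ∈ U)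
    (ρ : {v : V // v ∉ U} → Q) :
    (G.pull (pi1 U φ ψ ρ) (Subtype.val : {e // e ∈ G.edgesWithin U} → E)).trees.card
      * U.ncard ^ 2 =
    U.ncard ^ (Fintype.card (Q ⊕ {u : V // u ∈ U ∧ ∀ a, φ a ≠ u})) *
      ∏ q : Q, (univ.filter fun a => ρ (ψ a) = q).card := by
  have hpos : 0 < Fintype.card (Q ⊕ {u : V // u ∈ U ∧ ∀ a, φ a ≠ u}) :=
    Fintype.card_pos_iff.2 ⟨pi1 U φ ψ ρ u₀⟩
  obtain ⟨c, hc⟩ := Nat.exists_eq_succ_of_ne_zero hpos.ne'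
  let w : V → ℕ := fun v => if v ∈ U then 1 else 0
  have hbase : ∀ x y, x ≠ y → (univ.filter fun e =>
      (G.pull id (Subtype.val : {e // e ∈ G.edgesWithin U} → E)).inc e = s(x, y)).card
      = w x * w y := by
    intro x y hxy
    have hinc : ∀ e, (G.pull id (Subtype.val : {e // e ∈ G.edgesWithin U} → E)).inc e =
        G.inc e.1 := by
      intro e; simp [pull]
    simp_rw [hinc]
    by_cases hx : x ∈ U
    · by_cases hy : y ∈ U
      · simp only [w, hx, hy, if_true, mul_one]
        obtain ⟨e, he, hun⟩ := hU.1 x hx y hy hxy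
        rw [Finset.card_eq_one]
        refine ⟨⟨e, ?_⟩, ?_⟩
        · intro v hv
          rw [he, Sym2.mem_iff] at hv
          rcases hv with rfl | rfl <;> assumption
        · ext ⟨f, hf⟩
          simp only [mem_filter, mem_univ, true_and, mem_singleton]
          refine ⟨fun h => Subtype.ext (hun f h), fun h => ?_⟩
          have h' : f = e := congrArg Subtype.val h
          rw [h']; exact he
      · simp only [w, hx, hy, if_true, if_false, mul_zero, Finset.card_eq_zero]
        rw [Finset.filter_eq_empty_iff]
        intro e _ he
        exact hy (e.2 y (by rw [he]; exact Sym2.mem_mk_right _ _))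
    · simp only [w, hx, if_false, zero_mul, Finset.card_eq_zero]
      rw [Finset.filter_eq_empty_iff]
      intro e _ he
      exact hx (e.2 x (by rw [he]; exact Sym2.mem_mk_left _ _))
  have hpp : (G.pull id (Subtype.val : {e // e ∈ G.edgesWithin U} → E)).pull (pi1 U φ ψ ρ) id =
      G.pull (pi1 U φ ψ ρ) (Subtype.val : {e // e ∈ G.edgesWithin U} → E) := by
    simp [pull]
  have h := core c _ _ ((G.pull id (Subtype.val : {e // e ∈ G.edgesWithin U} → E)).pull
    (pi1 U φ ψ ρ) id) (fun i => ∑ x with pi1 U φ ψ ρ x = i, w x) hc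
    (fun a b hab => by
      convert pull_mult _ w (pi1 U φ ψ ρ) hbase a b hab)
  have hsum : (∑ i, ∑ x with pi1 U φ ψ ρ x = i, w x) = U.ncard := by
    rw [Finset.sum_fiberwise, Set.ncard_eq_toFinset_card']
    simp only [w, Finset.sum_boole, Nat.cast_id]
    congr 1; ext; simp
  rw [hsum, hpp, Fintype.prod_sum_type] at h
  have hinr : ∀ u : {u : V // u ∈ U ∧ ∀ a, φ a ≠ u},
      (∑ x with pi1 U φ ψ ρ x = Sum.inr u, w x) = 1 := by
    rintro ⟨u, hu, hu'⟩
    have : (univ.filter fun x => pi1 U φ ψ ρ x = Sum.inr ⟨u, hu, hu'⟩) = {u} := by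
      ext x
      simp only [mem_filter, mem_univ, true_and, mem_singleton]
      constructor
      · intro h
        by_cases hx : x ∈ U
        · by_cases h' : ∃ a, φ a = x
          · obtain ⟨a, rfl⟩ := h'
            rw [pi1_phi U φ ψ ρ hφ hφU] at h
            cases h
          · rw [pi1_free U φ ψ ρ x hx (fun a ha => h' ⟨a, ha⟩)] at h
            simpa using h
        · rw [pi1_out U φ ψ ρ x hx] at h
          cases h
      · rintro rfl
        exact pi1_free U φ ψ ρ x hu hu'
    rw [this, Finset.sum_singleton]
    simp [w, hu]
  have hinl : ∀ q : Q, (∑ x with pi1 U φ ψ ρ x = Sum.inl q, w x) =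
      (univ.filter fun a => ρ (ψ a) = q).card := by
    intro q
    simp only [w, Finset.sum_boole, Nat.cast_id, Finset.filter_filter]
    symm
    refine Finset.card_bij (fun a _ => φ a) ?_ ?_ ?_
    · intro a ha
      rw [mem_filter] at ha ⊢
      exact ⟨mem_univ _, by rw [pi1_phi U φ ψ ρ hφ hφU, ha.2], hφU a⟩
    · intro a _ b _ hab; exact hφ hab
    · intro x hx
      obtain ⟨_, h, hx⟩ := mem_filter.1 hx
      by_cases h' : ∃ a, φ a = x
      · obtain ⟨a, rfl⟩ := h'
        rw [pi1_phi U φ ψ ρ hφ hφU] at h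
        exact ⟨a, mem_filter.2 ⟨mem_univ _, Sum.inl.inj h⟩, rfl⟩
      · rw [pi1_free U φ ψ ρ x hx (fun a ha => h' ⟨a, ha⟩)] at h
        cases h
  rw [hc]
  simp_rw [hinr, hinl] at h
  simpa using h

end setup

section final

variable {V : Type u1} {E : Type u2} {Q : Type u3}

theorem image_pre (p : E → Prop) (R : Set E) (h : ∀ e ∈ R, p e) :
    (Subtype.val '' (Subtype.val ⁻¹' R : Set {e // p e})) = R := by
  ext e
  constructor
  · rintro ⟨e', he', rfl⟩; exact he'
  · intro he; exact ⟨⟨e, h e he⟩, he, rfl⟩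

theorem reach_within (G : Multigraph V E) (U : Set V) (x y : V)
    (h : G.Reach (G.edgesWithin U) x y) : x = y ∨ (x ∈ U ∧ y ∈ U) := by
  induction h with
  | refl => exact Or.inl rfl
  | @tail b c _ hs ih =>
    obtain ⟨e, he, hi⟩ := hs
    have hb : b ∈ U := he b (by rw [hi]; exact Sym2.mem_mk_left _ _)
    have hc : c ∈ U := he c (by rw [hi]; exact Sym2.mem_mk_right _ _)
    rcases ih with rfl | ⟨h, _⟩
    · exact Or.inr ⟨hb, hc⟩
    · exact Or.inr ⟨h, hc⟩

theorem clique_reach (G : Multigraph V E) (U : Set V) (hU : G.IsClique U) (x y : V)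
    (hx : x ∈ U) (hy : y ∈ U) : G.Reach (G.edgesWithin U) x y := by
  by_cases h : x = y
  · rw [h]; exact Relation.ReflTransGen.refl
  · obtain ⟨e, he, _⟩ := hU.1 x hx y hy h
    refine G.reach_step ?_ he
    intro v hv
    rw [he, Sym2.mem_iff] at hv
    rcases hv with rfl | rfl <;> assumption

theorem card_quot [Fintype V] (G : Multigraph V E) (U : Set V) (hU : G.IsClique U) (u₀ : V)
    (hu₀ : u₀ ∈ U) :
    Nat.card (Quotient (G.contractSetoid (G.edgesWithin U))) =
      Nat.card {v : V // v ∉ U} + 1 := by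
  rw [← Finite.card_option]
  symm
  let f : Option {v : V // v ∉ U} → Quotient (G.contractSetoid (G.edgesWithin U)) :=
    fun z => Option.elim z (Quotient.mk _ u₀) (fun w => Quotient.mk _ w.1)
  refine Nat.card_congr (Equiv.ofBijective f ⟨?_, ?_⟩)
  · rintro (_ | ⟨x, hx⟩) (_ | ⟨y, hy⟩) h
    · rfl
    · rcases G.reach_within U _ _ (Quotient.exact h) with h | h
      · exact (hy (by simp only at h; rw [← h]; exact hu₀)).elim
      · exact absurd h.2 hy
    · rcases G.reach_within U _ _ (Quotient.exact h) with h | h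
      · exact (hx (by simp only at h; rw [h]; exact hu₀)).elim
      · exact absurd h.1 hx
    · rcases G.reach_within U _ _ (Quotient.exact h) with h | h
      · simp only at h
        subst h; rfl
      · exact absurd h.1 hx
  · intro z
    induction z using Quotient.ind with
    | _ v =>
      by_cases hv : v ∈ U
      · exact ⟨none, Quotient.sound (G.clique_reach U hU _ _ hu₀ hv)⟩
      · exact ⟨some ⟨v, hv⟩, rfl⟩

theorem per_R [Fintype V] [Fintype E] [Fintype Q] (G : Multigraph V E) (U : Set V)
    (hU : G.IsClique U) (u₀ : V) (hu₀ : u₀ ∈ U)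
    (M : Set E) (φ : {e // e ∈ M} → V) (ψ : {e // e ∈ M} → {v : V // v ∉ U})
    (hφ : Function.Injective φ) (hφU : ∀ a, φ a ∈ U)
    (hinc : ∀ a : {e // e ∈ M}, G.inc a = s(φ a, (ψ a).1))
    (hMU : ∀ e ∈ M, e ∉ G.edgesWithin U)
    (R : Set E) (hR : R ⊆ G.edgesWithin Uᶜ)
    (ρ : {v : V // v ∉ U} → Q) (hρs : Function.Surjective ρ)
    (hρ : ∀ x y, ρ x = ρ y ↔ G.Reach R x y)
    (ιM : {e // e ∈ M} → {e // e ∉ G.edgesWithin U}) (hιM : ∀ a, (ιM a).1 = a.1) :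
    ((univ.filter fun T : Set E => G.IsSpanningTree T ∧ (M ∪ R) ⊆ T ∧
      T ⊆ (M ∪ R) ∪ Set.range (Subtype.val : {e // e ∈ G.edgesWithin U} → E)).card : ℚ) =
    (U.ncard : ℚ) ^ ((U.ncard : ℤ) - 2 - (M.ncard : ℤ)) *
      ((univ.filter fun T : Set {e // e ∉ G.edgesWithin U} =>
        (G.contract (G.edgesWithin U)).IsSpanningTree T ∧ (Subtype.val ⁻¹' R) ⊆ T ∧
        T ⊆ (Subtype.val ⁻¹' R) ∪ Set.range ιM).card *
        (U.ncard : ℚ) ^ (Nat.card {v : V // v ∉ U} - R.ncard)) := by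
  obtain ⟨s1, a1, b1⟩ := pi1_conn G U M φ ψ hφ hφU hinc R hR ρ hρs hρ
  obtain ⟨s2, a2, b2⟩ := pi2_conn G U hU u₀ hu₀ R hR ρ hρs hρ
  have hRU : ∀ e ∈ R, e ∉ G.edgesWithin U := by
    intro e he he'
    obtain ⟨x, y, hxy⟩ := exists_ends (G.inc e)
    have hm : x ∈ G.inc e := by rw [hxy]; exact Sym2.mem_mk_left _ _
    exact hR he x hm (he' x hm)
  have hMR : Disjoint M R := by
    rw [Set.disjoint_left]
    intro e he he'
    refine hR he' (φ ⟨e, he⟩) ?_ (hφU _)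
    have := hinc ⟨e, he⟩
    simp only at this
    rw [this]; exact Sym2.mem_mk_left _ _
  have hιinj : Function.Injective ιM := by
    intro a b hab
    apply Subtype.ext
    rw [← hιM, ← hιM, hab]
  -- cardinalities
  have cMR : (M ∪ R).ncard = M.ncard + R.ncard :=
    Set.ncard_union_eq hMR (Set.toFinite _) (Set.toFinite _)
  have cR' : (Subtype.val ⁻¹' R : Set {e // e ∉ G.edgesWithin U}).ncard = R.ncard := by
    rw [← Set.ncard_image_of_injective _ Subtype.val_injective, image_pre _ R hRU]
  have cV : Nat.card V = U.ncard + Nat.card {v : V // v ∉ U} := by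
    have := Set.ncard_add_ncard_compl U
    rw [← this]; rfl
  have cM : M.ncard + Fintype.card {u : V // u ∈ U ∧ ∀ a, φ a ≠ u} = U.ncard := by
    have h1 : (Set.range φ).ncard = M.ncard := by
      rw [← Set.image_univ, Set.ncard_image_of_injective _ hφ, Set.ncard_univ]; rfl
    have h2 : Fintype.card {u : V // u ∈ U ∧ ∀ a, φ a ≠ u} = (U \ Set.range φ).ncard := by
      rw [← Nat.card_eq_fintype_card, ← Nat.card_coe_set_eq]
      refine Nat.card_congr (Equiv.subtypeEquivRight ?_)
      intro u
      simp
    have h3 : Set.range φ ⊆ U := by rintro _ ⟨a, rfl⟩; exact hφU a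
    have h4 := Set.ncard_sdiff_add_ncard_of_subset h3 (Set.toFinite _)
    omega
  have cI : Fintype.card (Q ⊕ {u : V // u ∈ U ∧ ∀ a, φ a ≠ u}) =
      Fintype.card Q + Fintype.card {u : V // u ∈ U ∧ ∀ a, φ a ≠ u} := Fintype.card_sum
  have cle := card_le_of_comps G _ s1 (M ∪ R) b1
  have cq := card_quot G U hU u₀ hu₀
  have conn1 := G.pull_connected (pi1 U φ ψ ρ)
    (Subtype.val : {e // e ∈ G.edgesWithin U} → E) (M ∪ R) s1 a1 b1
  have conn2 : ∀ S, (G.pull (pi2 U ρ) (Subtype.val : {e // e ∈ M} → E)).ConnectedOn S ↔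
      (G.contract (G.edgesWithin U)).ConnectedOn ((Subtype.val ⁻¹' R) ∪ ιM '' S) := by
    intro S
    rw [G.pull_connected (pi2 U ρ) (Subtype.val : {e // e ∈ M} → E) _ s2 a2 b2]
    have h := G.pull_connected (Quotient.mk (G.contractSetoid (G.edgesWithin U)))
      (Subtype.val : {e // e ∉ G.edgesWithin U} → E) (G.edgesWithin U)
      Quotient.mk_surjective (fun e he x y hxy => Quotient.sound (G.reach_step he hxy))
      (fun x y hxy => Quotient.exact hxy) ((Subtype.val ⁻¹' R) ∪ ιM '' S)
    refine Iff.trans ?_ h.symm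
    have hset : G.edgesWithin U ∪ R ∪ Subtype.val '' S =
        G.edgesWithin U ∪ Subtype.val '' ((Subtype.val ⁻¹' R) ∪ ιM '' S) := by
      rw [Set.image_union, ← Set.image_comp, Set.union_assoc]
      have e1 : (Subtype.val ∘ ιM) = (Subtype.val : {e // e ∈ M} → E) := funext hιM
      rw [e1, image_pre _ R hRU]
    rw [hset]
  have hd1 : ∀ e : {e // e ∈ G.edgesWithin U}, e.1 ∉ M ∪ R := by
    rintro ⟨e, he⟩ (h | h)
    · exact hMU e h he
    · exact hRU e h he
  have hd2 : ∀ a, ιM a ∉ (Subtype.val ⁻¹' R : Set {e // e ∉ G.edgesWithin U}) := by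
    intro a h
    rw [Set.mem_preimage, hιM] at h
    exact Set.disjoint_left.1 hMR a.2 h
  rw [Nat.card_eq_fintype_card (α := Q ⊕ _)] at cle
  by_cases hP : R.ncard + Fintype.card Q = Nat.card {v : V // v ∉ U}
  · rw [lift_count G (G.pull (pi1 U φ ψ ρ) (Subtype.val : {e // e ∈ G.edgesWithin U} → E))
      Subtype.val Subtype.val_injective (M ∪ R) hd1 conn1
      (by rw [Nat.card_eq_fintype_card (α := Q ⊕ _)]; omega),
      lift_count (G.contract (G.edgesWithin U))
      (G.pull (pi2 U ρ) (Subtype.val : {e // e ∈ M} → E)) ιM hιinj _ hd2 conn2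
      (by rw [Finite.card_option, Nat.card_eq_fintype_card (α := Q)]; omega),
      star_trees (fun a => ρ (ψ a)) (G.pull (pi2 U ρ) (Subtype.val : {e // e ∈ M} → E)) (by
        intro a
        show (G.inc a.1).map _ = _
        rw [hinc a, Sym2.map_mk]
        simp [pi2, hφU a, (ψ a).2])]
    have h := clique_count G U hU u₀ hu₀ M φ ψ hφ hφU ρ
    have hn : (U.ncard : ℚ) ≠ 0 := by
      have : U.ncard ≠ 0 := Set.ncard_ne_zero_of_mem hu₀ (Set.toFinite _)
      exact_mod_cast this
    have hk : Nat.card {v : V // v ∉ U} - R.ncard = Fintype.card Q := by omega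
    have hz : (U.ncard : ℤ) - 2 - (M.ncard : ℤ) =
        (Fintype.card {u : V // u ∈ U ∧ ∀ a, φ a ≠ u} : ℤ) - (2 : ℕ) := by
      push_cast; omega
    rw [hk, hz, zpow_sub₀ hn, zpow_natCast, zpow_natCast]
    rw [cI, pow_add] at h
    have h' := congrArg (Nat.cast : ℕ → ℚ) h
    push_cast at h' ⊢
    field_simp
    rw [h']; ring
  · rw [lift_zero G (G.pull (pi1 U φ ψ ρ) (Subtype.val : {e // e ∈ G.edgesWithin U} → E))
      Subtype.val Subtype.val_injective (M ∪ R) hd1 conn1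
      (by rw [Nat.card_eq_fintype_card (α := Q ⊕ _)]; omega),
      lift_zero (G.contract (G.edgesWithin U))
      (G.pull (pi2 U ρ) (Subtype.val : {e // e ∈ M} → E)) ιM hιinj _ hd2 conn2
      (by rw [Finite.card_option, Nat.card_eq_fintype_card (α := Q)]; omega)]
    simp

end final
end Multigraph

open Multigraph

/-- with `U` a clique, `M = E_G(U)`, `N ⊆ E(G − U)`, and every
component of `G[M]` a star with center in `V − U`,
`τ_G(M ∪ N) = |U|^{|U|−2−|M|} Σ_{T ∈ ST_{G•U}(N)} |U|^{|E_T(u)|}`. -/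
theorem tau_contract_clique {V : Type u} {E : Type v} [Fintype V] [Fintype E]
    (G : Multigraph V E) (hconn : G.Connected) (hloop : G.Loopless)
    (U : Set V) (hU : G.IsClique U) (u₀ : V) (hu₀ : u₀ ∈ U)
    (M : Set E) (hM : M = G.edgeBoundary U)
    (N : Set E) (hN : N ⊆ G.edgesWithin Uᶜ)
    (hstar : G.StarComponents M Uᶜ) :
    (G.tau (M ∪ N) : ℚ) =
      (U.ncard : ℚ) ^ ((U.ncard : ℤ) - 2 - (M.ncard : ℤ)) *
        ∑ᶠ T ∈ (G.contract (G.edgesWithin U)).ST (Subtype.val ⁻¹' N),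
          (U.ncard : ℚ) ^
            ({e ∈ T | Quotient.mk (G.contractSetoid (G.edgesWithin U)) u₀ ∈
              (G.contract (G.edgesWithin U)).inc e}).ncard := by
  classical
  have htri : ∀ e, e ∉ G.edgesWithin U → e ∉ M → e ∈ G.edgesWithin Uᶜ := by
    intro e h1 h2 v hv hvU
    obtain ⟨x, hx⟩ := hv
    apply h2
    rw [hM]
    refine ⟨v, x, hx, hvU, fun hxU => h1 ?_⟩
    intro y hy
    rw [hx, Sym2.mem_iff] at hy
    rcases hy with rfl | rfl <;> assumption
  have hends : ∀ a : {e // e ∈ M}, ∃ x : V, ∃ y : {v : V // v ∉ U},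
      G.inc a = s(x, y.1) ∧ x ∈ U := by
    rintro ⟨e, he⟩
    rw [hM] at he
    obtain ⟨x, y, h, hx, hy⟩ := he
    exact ⟨x, ⟨y, hy⟩, h, hx⟩
  choose φ ψ hinc hφU using hends
  have hmφ : ∀ a : {e // e ∈ M}, φ a ∈ G.inc a := fun a => by
    rw [hinc a]; exact Sym2.mem_mk_left _ _
  have hmψ : ∀ a : {e // e ∈ M}, (ψ a).1 ∈ G.inc a := fun a => by
    rw [hinc a]; exact Sym2.mem_mk_right _ _
  have hφ : Function.Injective φ := by
    intro a b hab
    obtain ⟨w, hw, h⟩ := hstar a a.2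
    have caa : G.EdgeConn M a a := ⟨φ a, φ a, hmφ a, hmφ a, Relation.ReflTransGen.refl⟩
    have cab : G.EdgeConn M a b := ⟨φ a, φ b, hmφ a, hmφ b, by
      rw [hab]; exact Relation.ReflTransGen.refl⟩
    have h1 := h a a.2 caa
    have h2 := h b b.2 cab
    have wa : w = (ψ a).1 := by
      have := h1.1
      rw [hinc a, Sym2.mem_iff] at this
      rcases this with h | h
      · exact absurd (h ▸ hφU a) hw
      · exact h
    have wb : w = (ψ b).1 := by
      have := h2.1
      rw [hinc b, Sym2.mem_iff] at this
      rcases this with h | h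
      · exact absurd (h ▸ hφU b) hw
      · exact h
    exact Subtype.ext (h2.2.2 a a.2 caa (by rw [hinc a, hinc b, hab, ← wa, ← wb]))
  have hMU : ∀ e ∈ M, e ∉ G.edgesWithin U := fun e he h =>
    (ψ ⟨e, he⟩).2 (h _ (hmψ ⟨e, he⟩))
  have hMW : ∀ e ∈ M, e ∉ G.edgesWithin Uᶜ := fun e he h =>
    h _ (hmφ ⟨e, he⟩) (hφU _)
  have hWU : ∀ e ∈ G.edgesWithin Uᶜ, e ∉ G.edgesWithin U := by
    intro e he he'
    obtain ⟨x, y, hxy⟩ := exists_ends (G.inc e)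
    have hm : x ∈ G.inc e := by rw [hxy]; exact Sym2.mem_mk_left _ _
    exact he x hm (he' x hm)
  let ιM : {e // e ∈ M} → {e // e ∉ G.edgesWithin U} := fun a => ⟨a.1, hMU a.1 a.2⟩
  have hdeg : ∀ e : {e // e ∉ G.edgesWithin U},
      Quotient.mk (G.contractSetoid (G.edgesWithin U)) u₀ ∈
        (G.contract (G.edgesWithin U)).inc e ↔ e.1 ∈ M := by
    intro e
    show _ ∈ (G.inc e.1).map _ ↔ _
    rw [Sym2.mem_map]
    constructor
    · rintro ⟨x, hx, hxu⟩
      have hxU : x ∈ U := by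
        rcases G.reach_within U _ _ (Quotient.exact hxu) with h | h
        · rw [h]; exact hu₀
        · exact h.1
      by_contra hc
      exact htri e.1 e.2 hc x hx hxU
    · intro he
      exact ⟨φ ⟨e.1, he⟩, hmφ ⟨e.1, he⟩,
        Quotient.sound (G.clique_reach U hU _ _ (hφU _) hu₀)⟩
  have hcq := card_quot G U hU u₀ hu₀
  let 𝓡 : Finset (Set E) := Finset.univ.filter fun R => N ⊆ R ∧ R ⊆ G.edgesWithin Uᶜ
  let 𝓛 : Finset (Set E) := Finset.univ.filter fun T => T ∈ G.ST (M ∪ N)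
  let 𝓒 : Finset (Set {e // e ∉ G.edgesWithin U}) := Finset.univ.filter fun T =>
    T ∈ (G.contract (G.edgesWithin U)).ST (Subtype.val ⁻¹' N)
  have hL : G.tau (M ∪ N) = 𝓛.card := by
    rw [tau, Set.ncard_eq_toFinset_card']
    congr 1; ext; simp [𝓛]
  rw [hL, finsum_mem_eq_finite_toFinset_sum _ (Set.toFinite _)]
  have hC : (Set.toFinite ((G.contract (G.edgesWithin U)).ST (Subtype.val ⁻¹' N))).toFinset
      = 𝓒 := by
    ext; simp [𝓒]
  rw [hC]
  rw [Finset.card_eq_sum_card_fiberwise (f := fun T => T ∩ G.edgesWithin Uᶜ) (t := 𝓡) (by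
    intro T hT
    have hT' := (Finset.mem_filter.1 (Finset.mem_coe.1 hT)).2
    refine Finset.mem_coe.2 (Finset.mem_filter.2 ⟨Finset.mem_univ _, ?_, Set.inter_subset_right⟩)
    exact Set.subset_inter (Set.subset_union_right.trans hT'.2) hN)]
  rw [← Finset.sum_fiberwise_of_maps_to (s := 𝓒) (t := 𝓡)
    (g := fun T => Subtype.val '' T ∩ G.edgesWithin Uᶜ) (by
    intro T hT
    have hT' := (Finset.mem_filter.1 hT).2
    refine Finset.mem_filter.2 ⟨Finset.mem_univ _, ?_, Set.inter_subset_right⟩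
    intro e he
    exact ⟨⟨⟨e, hWU e (hN he)⟩, hT'.2 he, rfl⟩, hN he⟩)]
  rw [Finset.mul_sum, Nat.cast_sum]
  refine Finset.sum_congr rfl fun R hR => ?_
  obtain ⟨hNR, hRW⟩ := (Finset.mem_filter.1 hR).2
  let sR : Setoid {v : V // v ∉ U} := (G.contractSetoid R).comap Subtype.val
  have : Fintype (Quotient sR) := Fintype.ofFinite _
  have hmain := per_R G U hU u₀ hu₀ M φ ψ hφ hφU hinc hMU R hRW (Quotient.mk sR)
    Quotient.mk_surjective (fun x y => Quotient.eq (r := sR)) ιM (fun a => rfl)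
  have hLeq : (𝓛.filter fun T => T ∩ G.edgesWithin Uᶜ = R) =
      (Finset.univ.filter fun T : Set E => G.IsSpanningTree T ∧ (M ∪ R) ⊆ T ∧
      T ⊆ (M ∪ R) ∪ Set.range (Subtype.val : {e // e ∈ G.edgesWithin U} → E)) := by
    ext T
    simp only [𝓛, Finset.mem_filter, Finset.mem_univ, true_and]
    constructor
    · rintro ⟨⟨hT, hMN⟩, rfl⟩
      refine ⟨hT, Set.union_subset (Set.subset_union_left.trans hMN) Set.inter_subset_left, ?_⟩
      intro e he
      by_cases h1 : e ∈ G.edgesWithin U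
      · exact Or.inr ⟨⟨e, h1⟩, rfl⟩
      · by_cases h2 : e ∈ M
        · exact Or.inl (Or.inl h2)
        · exact Or.inl (Or.inr ⟨he, htri e h1 h2⟩)
    · rintro ⟨hT, h1, h2⟩
      refine ⟨⟨hT, (Set.union_subset_union_right M hNR).trans h1⟩, ?_⟩
      apply Set.Subset.antisymm
      · rintro e ⟨he, heW⟩
        rcases h2 he with (h | h) | ⟨e', rfl⟩
        · exact absurd heW (hMW e h)
        · exact h
        · exact absurd e'.2 (hWU _ heW)
      · intro e he
        exact ⟨h1 (Or.inr he), hRW he⟩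
  have hCeq : (𝓒.filter fun T => Subtype.val '' T ∩ G.edgesWithin Uᶜ = R) =
      (Finset.univ.filter fun T : Set {e // e ∉ G.edgesWithin U} =>
        (G.contract (G.edgesWithin U)).IsSpanningTree T ∧ (Subtype.val ⁻¹' R) ⊆ T ∧
        T ⊆ (Subtype.val ⁻¹' R) ∪ Set.range ιM) := by
    ext T
    simp only [𝓒, Finset.mem_filter, Finset.mem_univ, true_and]
    constructor
    · rintro ⟨⟨hT, hMN⟩, rfl⟩
      refine ⟨hT, ?_, ?_⟩
      · rintro e ⟨⟨e', he', h⟩, _⟩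
        rwa [← Subtype.ext h]
      · intro e he
        by_cases h2 : e.1 ∈ M
        · exact Or.inr ⟨⟨e.1, h2⟩, rfl⟩
        · exact Or.inl ⟨⟨e, he, rfl⟩, htri e.1 e.2 h2⟩
    · rintro ⟨hT, h1, h2⟩
      refine ⟨⟨hT, fun e he => h1 (hNR he)⟩, ?_⟩
      apply Set.Subset.antisymm
      · rintro _ ⟨⟨e, he, rfl⟩, heW⟩
        rcases h2 he with h | ⟨a, rfl⟩
        · exact h
        · exact absurd heW (hMW _ a.2)
      · intro e he
        exact ⟨⟨⟨e, hWU e (hRW he)⟩, h1 he, rfl⟩, hRW he⟩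
  rw [hLeq, hCeq, hmain]
  congr 1
  rw [Finset.sum_congr rfl (g := fun _ =>
    (U.ncard : ℚ) ^ (Nat.card {v : V // v ∉ U} - R.ncard)), Finset.sum_const, nsmul_eq_mul]
  intro T hT
  obtain ⟨hT, h1, h2⟩ := (Finset.mem_filter.1 hT).2
  have cR' : (Subtype.val ⁻¹' R : Set {e // e ∉ G.edgesWithin U}).ncard = R.ncard := by
    rw [← Set.ncard_image_of_injective _ Subtype.val_injective,
      image_pre _ R (fun e he => hWU e (hRW he))]
  have hsp : {e ∈ T | Quotient.mk (G.contractSetoid (G.edgesWithin U)) u₀ ∈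
      (G.contract (G.edgesWithin U)).inc e} = T \ (Subtype.val ⁻¹' R) := by
    ext e
    constructor
    · rintro ⟨he, hm⟩
      exact ⟨he, fun h => hMW _ ((hdeg e).1 hm) (hRW h)⟩
    · rintro ⟨he, hm⟩
      refine ⟨he, (hdeg e).2 ?_⟩
      rcases h2 he with h | ⟨a, rfl⟩
      · exact absurd h hm
      · exact a.2
  have h4 := Set.ncard_sdiff_add_ncard_of_subset h1 (Set.toFinite _)
  have h5 := hT.2
  rw [hsp]
  congr 1
  omega

end PaperST
end

section
/- Let G = (V,E) be a connected loopless multigraph whose vertex set is partitioned into nonempty sets V_0, V_1, ..., V_k such that: each V_i (1 ≤ i ≤ k) is a clique of G; E_G(V_i,V_j) = ∅ for all 1 ≤ i < j ≤ k; and each component of G[M] is a star with center in V_0, where M_i = E_G(V_i,V_0) and M = M_1 ∪ ... ∪ M_k. Let U = V_1 ∪ ... ∪ V_k and let G•U be obtained from G by contracting all edges in each G[V_i], with v_i the vertex arising from V_i. Then for any N ⊆ E(G[V_0]): τ_G(M ∪ N) = (∏_{i=1}^k |V_i|^{|V_i| − 2 − |M_i|}) · Σ_{T ∈ ST_{G•U}(N)}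 ∏_{i=1}^k |V_i|^{|E_T(v_i)|}, where ST_{G•U}(N) is the set of spanning trees of G•U containing all edges of N and E_T(v_i) is the set of edges of T incident with v_i. -/
/-!
Spanning trees of multigraphs: common definitions.

A multigraph on a vertex type `V` with edge type `E` is given by an incidence
map `inc : E → Sym2 V` sending each edge to its (unordered) pair of endpoints.
-/

namespace PaperST

universe u v

namespace Multigraph
section helpers
set_option linter.unusedSectionVars false
set_option linter.unusedSimpArgs false
set_option linter.deprecated false
open Classical Finset

theorem gen_le (G : Multigraph V E) (A : Set E) (s : Setoid V) :
    G.contractSetoid A ≤ s ↔ ∀ e ∈ A, ∀ u v, G.inc e = s(u, v) → s u v := by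
  constructor
  · intro h e he u v huv
    exact h (Relation.ReflTransGen.single ⟨e, he, huv⟩)
  · intro h x y hxy
    change Relation.ReflTransGen (G.Step A) x y at hxy
    induction hxy with
    | refl => exact s.refl _
    | tail _ h2 ih =>
      obtain ⟨e, he, h2⟩ := h2
      exact s.trans ih (h e he _ _ h2)

theorem gen_rel (G : Multigraph V E) {A : Set E} {e : E} (he : e ∈ A) {u v : V}
    (h : G.inc e = s(u, v)) : G.contractSetoid A u v :=
  Relation.ReflTransGen.single ⟨e, he, h⟩

theorem gen_mono (G : Multigraph V E) {A B : Set E} (h : A ⊆ B) :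
    G.contractSetoid A ≤ G.contractSetoid B := by
  rw [gen_le]; intro e he u v huv; exact G.gen_rel (h he) huv

theorem gen_union (G : Multigraph V E) (A B : Set E) :
    G.contractSetoid (A ∪ B) = G.contractSetoid A ⊔ G.contractSetoid B := by
  apply le_antisymm
  · rw [gen_le]
    rintro e (he | he) u v huv
    · exact (le_sup_left : _ ≤ G.contractSetoid A ⊔ G.contractSetoid B) (G.gen_rel he huv)
    · exact (le_sup_right : _ ≤ G.contractSetoid A ⊔ G.contractSetoid B) (G.gen_rel he huv)
  · exact sup_le (G.gen_mono Set.subset_union_left) (G.gen_mono Set.subset_union_right)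

theorem gen_empty (G : Multigraph V E) : G.contractSetoid ∅ = ⊥ := by
  rw [eq_bot_iff, gen_le]; simp

variable [Fintype V] [Fintype E]

noncomputable def rk (s : Setoid V) : ℕ := Fintype.card (Quotient s)

noncomputable def prodS (h : Set V → ℚ) (s : Setoid V) : ℚ :=
  ∏ c : Quotient s, h {x | Quotient.mk s x = c}

theorem rk_nat (s : Setoid V) : rk s = Nat.card (Quotient s) := by
  unfold rk; rw [Nat.card_eq_fintype_card]

theorem rk_ker {Y : Type*} [DecidableEq Y] (f : V → Y) : rk (Setoid.ker f) = (univ.image f).card := by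
  rw [rk_nat, Nat.card_congr (Setoid.quotientKerEquivRange f),
    Nat.card_coe_set_eq, ← Set.ncard_coe_finset]
  congr 1
  simp

theorem prodS_ker' {Y : Type*} [DecidableEq Y] (f : V → Y) (h : Set V → ℚ) (s : Setoid V)
    (hs : ∀ x y, s x y ↔ f x = f y) :
    prodS h s = ∏ y ∈ univ.image f, h {x | f x = y} := by
  unfold prodS
  refine Finset.prod_bij (fun c _ => Quotient.lift f (fun a b hab => (hs a b).1 hab) c) ?_ ?_ ?_ ?_
  · intro c _; induction c using Quotient.inductionOn; simp
  · intro c _ d _ hcd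
    induction c using Quotient.inductionOn
    induction d using Quotient.inductionOn
    exact Quotient.sound ((hs _ _).2 hcd)
  · intro y hy
    obtain ⟨x, _, rfl⟩ := Finset.mem_image.1 hy
    exact ⟨Quotient.mk _ x, mem_univ _, rfl⟩
  · intro c _
    induction c using Quotient.inductionOn with | _ a =>
    congr 1
    ext x
    simp only [Set.mem_setOf_eq, Quotient.lift_mk]
    rw [Quotient.eq]; exact hs _ _

theorem prodS_ker {Y : Type*} [DecidableEq Y] (f : V → Y) (h : Set V → ℚ) :
    prodS h (Setoid.ker f) = ∏ y ∈ univ.image f, h {x | f x = y} :=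
  prodS_ker' f h _ (fun _ _ => Iff.rfl)

noncomputable def mrg (s : Setoid V) (u v : V) (x : V) : Quotient s :=
  if Quotient.mk s x = Quotient.mk s v then Quotient.mk s u else Quotient.mk s x

theorem sup_edge (G : Multigraph V E) (s : Setoid V) (e : E) (u v : V) (he : G.inc e = s(u, v)) :
    s ⊔ G.contractSetoid {e} = Setoid.ker (mrg s u v) := by
  apply le_antisymm
  · refine sup_le ?_ ?_
    · intro x y hxy
      have : Quotient.mk s x = Quotient.mk s y := Quotient.sound hxy
      simp [Setoid.ker, Function.onFun, mrg, this]
    · rw [gen_le]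
      rintro f rfl a b hab
      rw [he, Sym2.eq_iff] at hab
      rcases hab with ⟨rfl, rfl⟩ | ⟨rfl, rfl⟩ <;> simp [Setoid.ker, Function.onFun, mrg]
  · have key : ∀ x, ∃ z, mrg s u v x = Quotient.mk s z ∧ (s ⊔ G.contractSetoid {e}) x z := by
      intro x
      by_cases h : Quotient.mk s x = Quotient.mk s v
      · refine ⟨u, by simp [mrg, h], ?_⟩
        have h1 : s x v := Quotient.exact h
        exact Setoid.trans' _ ((le_sup_left : s ≤ s ⊔ G.contractSetoid {e}) h1)
          (Setoid.symm' _ ((le_sup_right : _ ≤ s ⊔ G.contractSetoid {e})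
            (G.gen_rel (Set.mem_singleton e) he)))
      · exact ⟨x, by simp [mrg, h], Setoid.refl' _ _⟩
    intro x y hxy
    obtain ⟨z, hz, hz'⟩ := key x
    obtain ⟨w, hw, hw'⟩ := key y
    have hzw : s z w := Quotient.exact (hz.symm.trans (Eq.trans hxy hw))
    exact Setoid.trans' _ hz' (Setoid.trans' _
      ((le_sup_left : s ≤ s ⊔ G.contractSetoid {e}) hzw) (Setoid.symm' _ hw'))

theorem image_mrg (s : Setoid V) (u v : V) (h : ¬ s u v) :
    univ.image (mrg s u v) = univ.erase (Quotient.mk s v) := by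
  have huv : Quotient.mk s u ≠ Quotient.mk s v := fun h' => h (Quotient.exact h')
  ext c
  induction c using Quotient.inductionOn with | _ a =>
  simp only [mem_image, mem_univ, true_and, mem_erase, and_true]
  constructor
  · rintro ⟨x, hx⟩
    unfold mrg at hx
    split_ifs at hx with h1
    · rw [← hx]; exact huv
    · rw [← hx]; exact h1
  · intro h1
    exact ⟨a, by simp [mrg, h1]⟩

theorem sup_edge_same (G : Multigraph V E) (s : Setoid V) (e : E) (u v : V)
    (he : G.inc e = s(u, v)) (h : s u v) : s ⊔ G.contractSetoid {e} = s := by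
  rw [sup_eq_left, gen_le]
  rintro f rfl a b hab
  rw [he, Sym2.eq_iff] at hab
  rcases hab with ⟨rfl, rfl⟩ | ⟨rfl, rfl⟩
  · exact h
  · exact Setoid.symm' _ h

theorem rk_merge (G : Multigraph V E) (s : Setoid V) (e : E) (u v : V) (he : G.inc e = s(u, v))
    (h : ¬ s u v) : rk (s ⊔ G.contractSetoid {e}) + 1 = rk s := by
  rw [G.sup_edge s e u v he, rk_ker, image_mrg s u v h]
  rw [card_erase_of_mem (mem_univ _)]
  have : 0 < rk s := Fintype.card_pos_iff.2 ⟨Quotient.mk s u⟩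
  simp only [card_univ]
  unfold rk at *
  omega

theorem prodS_merge (G : Multigraph V E) (s : Setoid V) (e : E) (u v : V) (he : G.inc e = s(u, v))
    (h : ¬ s u v) (g : Set V → ℚ) : prodS g (s ⊔ G.contractSetoid {e}) =
      g ({x | Quotient.mk s x = Quotient.mk s u} ∪ {x | Quotient.mk s x = Quotient.mk s v}) *
      ∏ c ∈ (univ.erase (Quotient.mk s v)).erase (Quotient.mk s u), g {x | Quotient.mk s x = c} := by
  have huv : Quotient.mk s u ≠ Quotient.mk s v := fun h' => h (Quotient.exact h')
  rw [G.sup_edge s e u v he, prodS_ker, image_mrg s u v h,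
    ← Finset.mul_prod_erase _ _ (show Quotient.mk s u ∈ univ.erase (Quotient.mk s v) by simp [huv])]
  congr 1
  · congr 1
    ext x
    simp only [mrg, Set.mem_setOf_eq, Set.mem_union]
    split_ifs with h1 <;> simp [h1]
  · apply Finset.prod_congr rfl
    intro c hc
    simp only [mem_erase, mem_univ, and_true] at hc
    congr 1
    ext x
    simp only [mrg, Set.mem_setOf_eq]
    split_ifs with h1
    · constructor
      · intro h2; exact absurd h2.symm hc.1
      · intro h2; exact absurd (h2.symm.trans h1) hc.2
    · rfl

theorem rk_le (G : Multigraph V E) (s : Setoid V) (A : Finset E) :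
    rk s ≤ A.card + rk (s ⊔ G.contractSetoid A) := by
  induction A using Finset.induction_on with
  | empty => simp [gen_empty]
  | insert e A he ih =>
    rw [card_insert_of_notMem he, coe_insert, Set.insert_eq, Set.union_comm, gen_union, ← sup_assoc]
    obtain ⟨⟨u, v⟩, huv⟩ := Sym2.mk_surjective (G.inc e)
    by_cases h : (s ⊔ G.contractSetoid A) u v
    · rw [G.sup_edge_same _ e u v huv.symm h]; omega
    · have := G.rk_merge _ e u v huv.symm h
      omega

def Fst (G : Multigraph V E) (s : Setoid V) (A : Finset E) : Prop :=
  A.card + rk (s ⊔ G.contractSetoid A) = rk s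

def Tr (G : Multigraph V E) (s : Setoid V) (A : Finset E) : Prop :=
  s ⊔ G.contractSetoid A = ⊤ ∧ A.card + 1 = rk s

theorem rk_top [Nonempty V] : rk (⊤ : Setoid V) = 1 := by
  unfold rk
  rw [Fintype.card_eq_one_iff]
  obtain ⟨x⟩ := ‹Nonempty V›
  refine ⟨Quotient.mk _ x, fun y => ?_⟩
  induction y using Quotient.inductionOn
  exact Quotient.sound trivial

theorem rk_eq_one [Nonempty V] (s : Setoid V) : rk s = 1 ↔ s = ⊤ := by
  constructor
  · intro h
    unfold rk at h
    rw [Fintype.card_eq_one_iff] at h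
    obtain ⟨c, hc⟩ := h
    rw [eq_top_iff]
    intro x y _
    exact Quotient.exact ((hc (Quotient.mk s x)).trans (hc (Quotient.mk s y)).symm)
  · rintro rfl; exact rk_top

theorem tr_iff [Nonempty V] (G : Multigraph V E) (s : Setoid V) (A : Finset E) :
    G.Tr s A ↔ G.Fst s A ∧ s ⊔ G.contractSetoid A = ⊤ := by
  unfold Tr Fst
  constructor
  · rintro ⟨h1, h2⟩; rw [h1, rk_top]; exact ⟨h2, rfl⟩
  · rintro ⟨h1, h2⟩; rw [h2, rk_top] at h1; exact ⟨h2, h1⟩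

theorem fst_union (G : Multigraph V E) (s : Setoid V) (A B : Finset E) (h : Disjoint A B) :
    G.Fst s (A ∪ B) ↔ G.Fst s A ∧ G.Fst (s ⊔ G.contractSetoid A) B := by
  unfold Fst
  rw [card_union_of_disjoint h, coe_union, gen_union, ← sup_assoc]
  have h1 := G.rk_le s A
  have h2 := G.rk_le (s ⊔ G.contractSetoid A) B
  omega

theorem tr_union [Nonempty V] (G : Multigraph V E) (s : Setoid V) (A B : Finset E) (h : Disjoint A B) :
    G.Tr s (A ∪ B) ↔ G.Fst s A ∧ G.Tr (s ⊔ G.contractSetoid A) B := by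
  rw [tr_iff, tr_iff, fst_union _ _ _ _ h, coe_union, gen_union, ← sup_assoc, and_assoc]

theorem fst_single (G : Multigraph V E) (s : Setoid V) (e : E) (u v : V) (he : G.inc e = s(u, v)) :
    G.Fst s {e} ↔ ¬ s u v := by
  unfold Fst
  rw [card_singleton, coe_singleton]
  by_cases h : s u v
  · rw [G.sup_edge_same s e u v he h]; simp [h]
  · have := G.rk_merge s e u v he h
    simp only [h, not_false_eq_true, iff_true]; omega

noncomputable def cnt (G : Multigraph V E) (S : Finset E) (s : Setoid V) : ℕ :=
  (S.powerset.filter (fun F => G.Tr s F)).card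

def Crs (G : Multigraph V E) (s : Setoid V) (e : E) : Prop := G.Fst s {e}

theorem cnt_mem [Nonempty V] (G : Multigraph V E) (S : Finset E) (s : Setoid V) (e : E) (he : e ∈ S) :
    (S.powerset.filter (fun F => G.Tr s F ∧ e ∈ F)).card =
      if G.Crs s e then G.cnt S (s ⊔ G.contractSetoid {e}) else 0 := by
  have key : ∀ F : Finset E, e ∉ F → (G.Tr s (insert e F) ↔
      G.Crs s e ∧ G.Tr (s ⊔ G.contractSetoid {e}) F) := by
    intro F hF
    rw [insert_eq, tr_union _ _ _ _ (by simpa using hF)]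
    simp [Crs]
  split_ifs with hc
  · unfold cnt
    refine Finset.card_bij' (fun F _ => F.erase e) (fun F _ => insert e F) ?_ ?_ ?_ ?_
    · intro F hF
      simp only [mem_filter, mem_powerset] at hF ⊢
      obtain ⟨h1, h2, h3⟩ := hF
      refine ⟨(erase_subset _ _).trans h1, ?_⟩
      rw [← insert_erase h3] at h2
      exact ((key _ (notMem_erase _ _)).1 h2).2
    · intro F hF
      simp only [mem_filter, mem_powerset] at hF ⊢
      refine ⟨insert_subset he hF.1, ?_, mem_insert_self _ _⟩
      have hn : e ∉ F := by
        intro hin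
        have h2 := hF.2
        rw [← insert_erase hin, insert_eq, tr_union _ _ _ _ (by simp)] at h2
        obtain ⟨⟨u, v⟩, huv⟩ := Sym2.mk_surjective (G.inc e)
        rw [G.fst_single _ e u v huv.symm] at h2
        exact h2.1 ((le_sup_right : _ ≤ s ⊔ G.contractSetoid {e})
            (G.gen_rel (Set.mem_singleton e) huv.symm))
      exact (key F hn).2 ⟨hc, hF.2⟩
    · intro F hF
      simp only [mem_filter] at hF
      exact insert_erase hF.2.2
    · intro F hF
      simp only [mem_filter, mem_powerset] at hF
      have hn : e ∉ F := by
        intro hin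
        have h2 := hF.2
        rw [← insert_erase hin, insert_eq, tr_union _ _ _ _ (by simp)] at h2
        obtain ⟨⟨u, v⟩, huv⟩ := Sym2.mk_surjective (G.inc e)
        rw [G.fst_single _ e u v huv.symm] at h2
        exact h2.1 ((le_sup_right : _ ≤ s ⊔ G.contractSetoid {e})
            (G.gen_rel (Set.mem_singleton e) huv.symm))
      exact erase_insert hn
  · rw [card_eq_zero, filter_eq_empty_iff]
    rintro F - ⟨h2, h3⟩
    rw [← insert_erase h3] at h2
    exact hc ((key _ (notMem_erase _ _)).1 h2).1

theorem cnt_rec [Nonempty V] (G : Multigraph V E) (S : Finset E) (s : Setoid V) :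
    ((rk s : ℚ) - 1) * G.cnt S s =
      ∑ e ∈ S with G.Crs s e, (G.cnt S (s ⊔ G.contractSetoid {e}) : ℚ) := by
  have h1 : ∑ e ∈ S with G.Crs s e, (G.cnt S (s ⊔ G.contractSetoid {e}) : ℚ) =
      ((∑ e ∈ S, (S.powerset.filter (fun F => G.Tr s F ∧ e ∈ F)).card : ℕ) : ℚ) := by
    push_cast
    rw [sum_filter]
    apply sum_congr rfl
    intro e he
    rw [G.cnt_mem S s e he]
    split_ifs <;> simp
  rw [h1]
  have h2 : ∑ e ∈ S, (S.powerset.filter (fun F => G.Tr s F ∧ e ∈ F)).card =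
      ∑ F ∈ S.powerset.filter (fun F => G.Tr s F), F.card := by
    have := Finset.sum_card_bipartiteAbove_eq_sum_card_bipartiteBelow
      (s := S) (t := S.powerset.filter (fun F => G.Tr s F)) (fun e F => e ∈ F)
    simp only [bipartiteAbove, bipartiteBelow, filter_filter] at this
    rw [this]
    apply sum_congr rfl
    intro F hF
    simp only [mem_filter, mem_powerset] at hF
    congr 1
    ext e
    simp only [mem_filter]
    exact ⟨fun h => h.2, fun h => ⟨hF.1 h, h⟩⟩
  rw [h2]
  push_cast
  rw [sum_congr rfl (g := fun _ => (rk s : ℚ) - 1)]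
  · rw [sum_const, nsmul_eq_mul, mul_comm]; rfl
  · intro F hF
    simp only [mem_filter, mem_powerset] at hF
    rw [← hF.2.2]; push_cast; ring

theorem cnt_unique [Nonempty V] (G : Multigraph V E) (S : Finset E) (s₀ : Setoid V)
    (φ : Setoid V → ℚ) (htop : φ ⊤ = 1)
    (hrec : ∀ s, s₀ ≤ s → s ≠ ⊤ → ((rk s : ℚ) - 1) * φ s =
      ∑ e ∈ S with G.Crs s e, φ (s ⊔ G.contractSetoid {e})) (s : Setoid V) (hs : s₀ ≤ s) :
    (G.cnt S s : ℚ) = φ s := by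
  induction hn : rk s using Nat.strong_induction_on generalizing s with
  | _ n ih =>
  by_cases ht : s = ⊤
  · subst ht
    rw [htop]
    have : S.powerset.filter (fun F => G.Tr ⊤ F) = {∅} := by
      ext F
      simp only [mem_filter, mem_powerset, mem_singleton, Tr, rk_top, top_sup_eq, true_and]
      constructor
      · rintro ⟨_, h⟩; rw [← card_eq_zero]; omega
      · rintro rfl; simp
    simp [cnt, this]
  · have h1 : (rk s : ℚ) - 1 ≠ 0 := by
      intro h
      apply ht
      rw [← rk_eq_one]
      have : (rk s : ℚ) = 1 := by linarith
      exact_mod_cast this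
    apply mul_left_cancel₀ h1
    rw [hrec s hs ht, cnt_rec]
    apply sum_congr rfl
    intro e he
    simp only [mem_filter] at he
    have he2 := he.2
    unfold Crs Fst at he2
    rw [card_singleton, coe_singleton] at he2
    exact ih _ (by omega) _ (hs.trans le_sup_left) rfl

theorem prodS_top [Nonempty V] (h : Set V → ℚ) : prodS h (⊤ : Setoid V) = h Set.univ := by
  have : (⊤ : Setoid V) = Setoid.ker (fun _ => ()) := by
    ext x y; simp [Setoid.ker, Function.onFun, Setoid.top_def]
  rw [this, prodS_ker]
  have h2 : (univ : Finset V).image (fun _ => ()) = {()} := by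
    ext; simp
  rw [h2]; simp

theorem crs_iff (G : Multigraph V E) (s : Setoid V) (e : E) (u v : V) (he : G.inc e = s(u, v)) :
    G.Crs s e ↔ ¬ s u v := G.fst_single s e u v he

theorem sum_pairs (G : Multigraph V E) (C : Finset V) (S : Finset E)
    (hS : ∀ e, e ∈ S ↔ ∀ v ∈ G.inc e, v ∈ C)
    (hu : ∀ u ∈ C, ∀ v ∈ C, u ≠ v → ∃! e : E, G.inc e = s(u, v)) (s : Setoid V)
    (φ : E → ℚ) (g : V → V → ℚ)
    (hg : ∀ e u v, G.inc e = s(u, v) → ¬ s u v → φ e = g u v + g v u) :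
    ∑ e ∈ S with G.Crs s e, φ e = ∑ p ∈ (C ×ˢ C) with ¬ s p.1 p.2, g p.1 p.2 := by
  have h1 : ∑ p ∈ (C ×ˢ C) with ¬ s p.1 p.2, g p.1 p.2 =
      ∑ p ∈ (C ×ˢ C) with ¬ s p.1 p.2, ∑ e ∈ S with G.Crs s e,
        if G.inc e = s(p.1, p.2) then g p.1 p.2 else 0 := by
    apply sum_congr rfl
    rintro ⟨u, v⟩ hp
    simp only [mem_filter, mem_product] at hp ⊢
    obtain ⟨⟨huC, hvC⟩, hn⟩ := hp
    have hne : u ≠ v := by rintro rfl; exact hn (Setoid.refl' _ _)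
    obtain ⟨e, he, heu⟩ := hu u huC v hvC hne
    rw [sum_eq_single e]
    · simp [he]
    · intro f _ hf
      rw [if_neg]
      exact fun h => hf (heu f h)
    · intro h
      exfalso; apply h
      simp only [mem_filter]
      refine ⟨(hS e).2 ?_, (G.crs_iff s e u v he).2 hn⟩
      rw [he]; simp [huC, hvC]
  rw [h1, sum_comm]
  apply sum_congr rfl
  intro e he
  simp only [mem_filter] at he
  obtain ⟨⟨u, v⟩, huv⟩ := Sym2.mk_surjective (G.inc e)
  have huv : G.inc e = s(u, v) := huv.symm
  have hn := (G.crs_iff s e u v huv).1 he.2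
  have hne : u ≠ v := by rintro rfl; exact hn (Setoid.refl' _ _)
  have hC := (hS e).1 he.1
  rw [huv] at hC
  have huC : u ∈ C := hC u (by simp)
  have hvC : v ∈ C := hC v (by simp)
  rw [hg e u v huv hn, ← sum_filter]
  have : ((C ×ˢ C).filter (fun p => ¬ s p.1 p.2)).filter (fun p => G.inc e = s(p.1, p.2)) =
      {(u, v), (v, u)} := by
    ext ⟨a, b⟩
    simp only [mem_filter, mem_product, mem_insert, mem_singleton, Prod.mk.injEq, huv, Sym2.eq_iff]
    constructor
    · rintro ⟨_, h⟩
      rcases h with ⟨rfl, rfl⟩ | ⟨rfl, rfl⟩ <;> simp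
    · rintro (⟨rfl, rfl⟩ | ⟨rfl, rfl⟩)
      · simp [huC, hvC, hn]
      · simp only [huC, hvC, and_true, true_and, or_true]
        exact fun h => hn (Setoid.symm' _ h)
  rw [this, sum_pair]
  intro h
  exact hne (Prod.mk.inj h).1

theorem sum_classes {ι : Type*} (I : Finset ι) (s : Setoid V) (π : ι → V)
    (F : Quotient s → ℚ) : ∑ i ∈ I, F (Quotient.mk s (π i)) =
      ∑ c : Quotient s, ((I.filter (fun i => Quotient.mk s (π i) = c)).card : ℚ) * F c := by
  rw [← Finset.sum_fiberwise_of_maps_to (s := I) (t := univ) (g := fun i => Quotient.mk s (π i))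
    (fun _ _ => mem_univ _)]
  apply sum_congr rfl
  intro c _
  rw [← nsmul_eq_mul, ← sum_const]
  apply sum_congr rfl
  intro i hi
  rw [(mem_filter.1 hi).2]

noncomputable def wt {ι : Type*} (I : Finset ι) (π : ι → V) (X : Set V) : ℚ :=
  ((I.filter (fun i => π i ∈ X)).card : ℚ)

theorem wt_eq {ι : Type*} (I : Finset ι) (π : ι → V) (s : Setoid V) (c : Quotient s) :
    wt I π {x | Quotient.mk s x = c} = ((I.filter (fun i => Quotient.mk s (π i) = c)).card : ℚ) := by
  unfold wt
  congr 2
  ext i; simp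

noncomputable def sw (c₀ : V) (M : Finset E) (w : E → V) (X : Set V) : ℚ :=
  if c₀ ∈ X then 1 else wt M w X

theorem sw_eq (c₀ : V) (M : Finset E) (w : E → V) (s : Setoid V) (c : Quotient s) :
    sw c₀ M w {x | Quotient.mk s x = c} = if Quotient.mk s c₀ = c then 1 else
      ((M.filter (fun e => Quotient.mk s (w e) = c)).card : ℚ) := by
  unfold sw
  rw [wt_eq]
  simp

theorem cnt_clique [Nonempty V] (G : Multigraph V E) (C : Finset V) (hC : C.Nonempty) (S : Finset E)
    (hS : ∀ e, e ∈ S ↔ ∀ v ∈ G.inc e, v ∈ C)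
    (hu : ∀ u ∈ C, ∀ v ∈ C, u ≠ v → ∃! e : E, G.inc e = s(u, v)) (s : Setoid V) :
    (G.cnt S s : ℚ) = (C.card : ℚ) ^ ((rk s : ℤ) - 2) *
      prodS (wt C id) s := by
  have hn0 : (C.card : ℚ) ≠ 0 := by
    have := hC.card_pos
    positivity
  refine G.cnt_unique S ⊥ (fun s => (C.card : ℚ) ^ ((rk s : ℤ) - 2) *
      prodS (wt C id) s) ?_ ?_ s bot_le
  · simp only [prodS_top, rk_top]
    have : wt C id (Set.univ : Set V) = C.card := by simp [wt]
    rw [this]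
    norm_num
    exact inv_mul_cancel₀ hn0
  · intro s _ _
    set h : Quotient s → ℚ := fun c => ((C.filter (fun x => Quotient.mk s x = c)).card : ℚ) with hh
    have hsum : ∑ c, h c = C.card := by
      have := sum_classes C s id (fun _ => 1)
      simp only [sum_const, nsmul_eq_mul, mul_one, id] at this
      exact this.symm
    rw [G.sum_pairs C S hS hu s _ (fun u v => (C.card : ℚ) ^ ((rk s : ℤ) - 3) *
      ∏ c ∈ univ.erase (Quotient.mk s v), h c)]
    · rw [sum_filter, sum_product_right]
      have h2 : ∀ v ∈ C, ∑ u ∈ C, (if ¬ s u v then (C.card : ℚ) ^ ((rk s : ℤ) - 3) *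
          ∏ c ∈ univ.erase (Quotient.mk s v), h c else 0) =
          (fun c' => (C.card - h c') * ((C.card : ℚ) ^ ((rk s : ℤ) - 3) *
            ∏ c ∈ univ.erase c', h c)) (Quotient.mk s v) := by
        intro v _
        rw [← sum_filter, sum_const, nsmul_eq_mul]
        congr 1
        have h3 := card_filter_add_card_filter_not (s := C) (fun u => s u v)
        have h4 : C.filter (fun x => Quotient.mk s x = Quotient.mk s v) = C.filter (fun u => s u v) := by
          ext x; simp only [mem_filter, Quotient.eq]
        simp only [hh, h4]
        rw [← h3]; push_cast; ring
      simp only at h2 ⊢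
      rw [sum_congr rfl h2]
      have h2' := sum_classes C s (fun v => v) (fun c' => (C.card - h c') * ((C.card : ℚ) ^ ((rk s : ℤ) - 3) *
            ∏ c ∈ univ.erase c', h c))
      rw [h2']
      have h5 : ∀ c' : Quotient s, h c' * ((C.card - h c') * ((C.card : ℚ) ^ ((rk s : ℤ) - 3) *
            ∏ c ∈ univ.erase c', h c)) = (C.card - h c') * ((C.card : ℚ) ^ ((rk s : ℤ) - 3) *
            ∏ c, h c) := by
        intro c'
        rw [← mul_prod_erase univ h (mem_univ c')]; ring
      rw [sum_congr rfl (fun c' _ => h5 c'), ← sum_mul, sum_sub_distrib, hsum]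
      have h6 : (C.card : ℚ) ^ ((rk s : ℤ) - 2) = (C.card : ℚ) ^ ((rk s : ℤ) - 3) * C.card := by
        rw [← zpow_add_one₀ hn0]; congr 1; ring
      rw [h6]
      simp only [sum_const, card_univ, nsmul_eq_mul, prodS, wt_eq, id]
      unfold rk
      ring
    · intro e u v he hn
      have hr := G.rk_merge s e u v he hn
      have huv : Quotient.mk s u ≠ Quotient.mk s v := fun h' => hn (Quotient.exact h')
      rw [prodS_merge G s e u v he hn]
      have e1 : (rk (s ⊔ G.contractSetoid {e}) : ℤ) - 2 = (rk s : ℤ) - 3 := by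
        rw [← hr]; push_cast; ring
      rw [e1]
      rw [← mul_prod_erase (univ.erase (Quotient.mk s v)) h (a := Quotient.mk s u) (by simp [huv]),
        ← mul_prod_erase (univ.erase (Quotient.mk s u)) h (a := Quotient.mk s v) (by simp [huv.symm]),
        erase_right_comm (a := Quotient.mk s u)]
      have e2 : wt C id ({x | Quotient.mk s x = Quotient.mk s u} ∪
          {x | Quotient.mk s x = Quotient.mk s v} : Set V) =
          h (Quotient.mk s u) + h (Quotient.mk s v) := by
        simp only [hh]
        unfold wt
        rw [← Nat.cast_add, ← card_union_of_disjoint]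
        · congr 2
          ext x; simp only [mem_filter, mem_union, Set.mem_union, Set.mem_setOf_eq, id]; tauto
        · rw [disjoint_filter]
          intro x _ h1 h2
          exact huv (h1.symm.trans h2)
      rw [e2]
      simp only [hh, wt_eq, id]
      ring

theorem cnt_star [Nonempty V] (G : Multigraph V E) (c₀ : V) (M : Finset E) (a w : E → V)
    (hinc : ∀ e ∈ M, G.inc e = s(a e, w e)) (s₀ : Setoid V) (ha : ∀ e ∈ M, s₀ (a e) c₀)
    (s : Setoid V) (hs : s₀ ≤ s) :
    (G.cnt M s : ℚ) = prodS (sw c₀ M w) s := by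
  refine G.cnt_unique M s₀ _ ?_ ?_ s hs
  · simp [prodS_top, sw]
  · intro s hs _
    set h : Quotient s → ℚ := fun c => if Quotient.mk s c₀ = c then 1 else
      ((M.filter (fun e => Quotient.mk s (w e) = c)).card : ℚ) with hh
    have h1 : ∀ e ∈ M, (if G.Crs s e then prodS (sw c₀ M w) (s ⊔ G.contractSetoid {e}) else 0) =
        (fun c => if c = Quotient.mk s c₀ then 0 else
          ∏ c' ∈ (univ.erase (Quotient.mk s c₀)).erase c, h c') (Quotient.mk s (w e)) := by
      intro e he
      have hac : Quotient.mk s (a e) = Quotient.mk s c₀ := Quotient.sound (hs (ha e he))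
      have hcr : G.Crs s e ↔ ¬ Quotient.mk s (w e) = Quotient.mk s c₀ := by
        rw [G.crs_iff s e _ _ (hinc e he), ← hac, eq_comm, Quotient.eq]
      by_cases hc : Quotient.mk s (w e) = Quotient.mk s c₀
      · simp [hcr, hc]
      · rw [if_pos (hcr.2 hc), prodS_merge G s e _ _ (hinc e he)
          ((G.crs_iff s e _ _ (hinc e he)).1 (hcr.2 hc)), hac]
        have h0 : sw c₀ M w ({x | Quotient.mk s x = Quotient.mk s c₀} ∪ {x | Quotient.mk s x = Quotient.mk s (w e)}) = 1 := by
          unfold sw; rw [if_pos]; simp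
        rw [h0, one_mul]
        simp only [if_neg hc]
        rw [erase_right_comm]
        simp only [sw_eq, hh]
    have h1' := sum_classes M s w (fun c => if c = Quotient.mk s c₀ then 0 else
          ∏ c' ∈ (univ.erase (Quotient.mk s c₀)).erase c, h c')
    rw [sum_filter, sum_congr rfl h1]
    simp only at h1' ⊢
    rw [h1']
    have h2 : prodS (sw c₀ M w) s = ∏ c ∈ univ.erase (Quotient.mk s c₀), h c := by
      have : h (Quotient.mk s c₀) = 1 := by simp [hh]
      rw [← one_mul (∏ c ∈ univ.erase (Quotient.mk s c₀), h c), ← this,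
        mul_prod_erase univ h (mem_univ _)]
      simp only [prodS, sw_eq, hh]
    rw [h2, ← add_sum_erase _ _ (mem_univ (Quotient.mk s c₀))]
    simp only [if_true, mul_zero, zero_add]
    have h3 : ∀ c ∈ univ.erase (Quotient.mk s c₀),
        ((M.filter (fun e => Quotient.mk s (w e) = c)).card : ℚ) * (if c = Quotient.mk s c₀ then 0 else
          ∏ c' ∈ (univ.erase (Quotient.mk s c₀)).erase c, h c') =
          ∏ c' ∈ univ.erase (Quotient.mk s c₀), h c' := by
      intro c hc
      have hc' := (mem_erase.1 hc).1
      rw [if_neg hc', ← mul_prod_erase _ h hc]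
      congr 1
      simp [hh, hc'.symm]
    rw [sum_congr rfl h3, sum_const, nsmul_eq_mul, card_erase_of_mem (mem_univ _), card_univ]
    congr 1
    have : 0 < rk s := Fintype.card_pos_iff.2 ⟨Quotient.mk s c₀⟩
    unfold rk at *
    rw [Nat.cast_sub this]; simp

noncomputable def fC (C : Finset V) (s : Setoid V) (x : V) : Option (Quotient s) :=
  if x ∈ C then none else some (Quotient.mk s x)

noncomputable def Q0 (C : Finset V) (s : Setoid V) : Finset (Quotient s) :=
  univ.filter (fun c => c ∉ C.image (Quotient.mk s))

theorem mem_Q0 (C : Finset V) (s : Setoid V) (hiso : ∀ x ∈ C, ∀ y, s x y → x = y) (x : V) :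
    Quotient.mk s x ∈ Q0 C s ↔ x ∉ C := by
  unfold Q0
  simp only [mem_filter, mem_univ, true_and, mem_image, not_exists, not_and]
  constructor
  · intro h hx; exact h x hx rfl
  · intro h y hy hyx
    have := hiso y hy x (Quotient.exact hyx)
    subst this; exact h hy

theorem supC (G : Multigraph V E) (C : Finset V) (S : Finset E)
    (hS : ∀ e, e ∈ S ↔ ∀ v ∈ G.inc e, v ∈ C)
    (hu : ∀ u ∈ C, ∀ v ∈ C, u ≠ v → ∃! e : E, G.inc e = s(u, v)) (s : Setoid V)
    (hiso : ∀ x ∈ C, ∀ y, s x y → x = y) :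
    s ⊔ G.contractSetoid S = Setoid.ker (fC C s) := by
  apply le_antisymm
  · refine sup_le ?_ ?_
    · intro x y hxy
      change fC C s x = fC C s y
      unfold fC
      by_cases hx : x ∈ C
      · rw [hiso x hx y hxy]
      · by_cases hy : y ∈ C
        · rw [hiso y hy x (Setoid.symm' _ hxy)]
        · rw [if_neg hx, if_neg hy, Quotient.sound hxy]
    · rw [gen_le]
      intro e he u v huv
      have h1 := (hS e).1 he
      rw [huv] at h1
      change fC C s u = fC C s v
      unfold fC
      rw [if_pos (h1 u (by simp)), if_pos (h1 v (by simp))]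
  · intro x y hxy
    change fC C s x = fC C s y at hxy
    unfold fC at hxy
    split_ifs at hxy with hx hy hy
    · by_cases hne : x = y
      · rw [hne]
      obtain ⟨e, he, _⟩ := hu x hx y hy hne
      have heS : e ∈ (S : Set E) := by
        rw [mem_coe, hS, he]; simp [hx, hy]
      exact (le_sup_right : _ ≤ s ⊔ G.contractSetoid S) (G.gen_rel heS he)
    · exact (le_sup_left : s ≤ s ⊔ G.contractSetoid S) (Quotient.exact (Option.some.inj hxy))

theorem imgC (C : Finset V) (hC : C.Nonempty) (s : Setoid V)
    (hiso : ∀ x ∈ C, ∀ y, s x y → x = y) :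
    univ.image (fC C s) = insert none ((Q0 C s).image some) := by
  ext o
  simp only [mem_image, mem_univ, true_and, mem_insert]
  constructor
  · rintro ⟨x, rfl⟩
    unfold fC
    split_ifs with hx
    · exact Or.inl rfl
    · exact Or.inr ⟨_, (mem_Q0 C s hiso x).2 hx, rfl⟩
  · rintro (rfl | ⟨c, hc, rfl⟩)
    · obtain ⟨x, hx⟩ := hC
      exact ⟨x, by simp [fC, hx]⟩
    · induction c using Quotient.inductionOn with | _ x =>
      rw [mem_Q0 C s hiso] at hc
      exact ⟨x, by simp [fC, hc]⟩

theorem rk_iso (C : Finset V) (s : Setoid V)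
    (hiso : ∀ x ∈ C, ∀ y, s x y → x = y) : rk s = C.card + (Q0 C s).card := by
  unfold rk Q0
  rw [← card_univ, ← card_filter_add_card_filter_not (s := univ) (fun c => c ∈ C.image (Quotient.mk s))]
  congr 1
  rw [filter_mem_eq_inter, univ_inter, card_image_of_injOn]
  intro x hx y _ hxy
  exact hiso x hx y (Quotient.exact hxy)

theorem rk_supC (G : Multigraph V E) (C : Finset V) (hC : C.Nonempty) (S : Finset E)
    (hS : ∀ e, e ∈ S ↔ ∀ v ∈ G.inc e, v ∈ C)
    (hu : ∀ u ∈ C, ∀ v ∈ C, u ≠ v → ∃! e : E, G.inc e = s(u, v)) (s : Setoid V)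
    (hiso : ∀ x ∈ C, ∀ y, s x y → x = y) :
    rk (s ⊔ G.contractSetoid S) = (Q0 C s).card + 1 := by
  rw [G.supC C S hS hu s hiso, rk_ker, imgC C hC s hiso, card_insert_of_notMem (by simp),
    card_image_of_injective _ (Option.some_injective _)]

theorem prodS_supC (G : Multigraph V E) (C : Finset V) (hC : C.Nonempty) (S : Finset E)
    (hS : ∀ e, e ∈ S ↔ ∀ v ∈ G.inc e, v ∈ C)
    (hu : ∀ u ∈ C, ∀ v ∈ C, u ≠ v → ∃! e : E, G.inc e = s(u, v)) (s : Setoid V)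
    (hiso : ∀ x ∈ C, ∀ y, s x y → x = y) (c₀ : V) (hc₀ : c₀ ∈ C) (M : Finset E) (w : E → V)
    (hw : ∀ e ∈ M, w e ∉ C) :
    prodS (sw c₀ M w) (s ⊔ G.contractSetoid S) =
      ∏ c ∈ Q0 C s, ((M.filter (fun e => Quotient.mk s (w e) = c)).card : ℚ) := by
  rw [G.supC C S hS hu s hiso, prodS_ker, imgC C hC s hiso, prod_insert (by simp),
    prod_image (fun a _ b _ h => Option.some_injective _ h)]
  have h0 : sw c₀ M w {x | fC C s x = none} = 1 := by
    unfold sw; rw [if_pos]; simp [fC, hc₀]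
  rw [h0, one_mul]
  apply prod_congr rfl
  intro c hc
  unfold sw
  rw [if_neg (by simp [fC, hc₀])]
  unfold wt
  congr 2
  ext e
  simp only [mem_filter]
  refine and_congr_right (fun he => ?_)
  simp [fC, hw e he]

noncomputable def fM (M : Finset E) (a w : E → V) (s : Setoid V) (x : V) : Quotient s :=
  if h : ∃ e ∈ M, a e = x then Quotient.mk s (w h.choose) else Quotient.mk s x

theorem fM_a (M : Finset E) (a w : E → V) (s : Setoid V) (hinj : Set.InjOn a M) (e : E) (he : e ∈ M) :
    fM M a w s (a e) = Quotient.mk s (w e) := by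
  have h : ∃ e' ∈ M, a e' = a e := ⟨e, he, rfl⟩
  unfold fM
  rw [dif_pos h, hinj h.choose_spec.1 he h.choose_spec.2]

theorem fM_n (M : Finset E) (a w : E → V) (s : Setoid V) (x : V) (h : ¬ ∃ e ∈ M, a e = x) :
    fM M a w s x = Quotient.mk s x := by
  unfold fM
  rw [dif_neg h]

theorem supM (G : Multigraph V E) (C : Finset V) (M : Finset E) (a w : E → V)
    (hinc : ∀ e ∈ M, G.inc e = s(a e, w e)) (ha : ∀ e ∈ M, a e ∈ C) (hw : ∀ e ∈ M, w e ∉ C)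
    (hinj : Set.InjOn a M) (s : Setoid V)
    (hiso : ∀ x ∈ C, ∀ y, s x y → x = y) :
    s ⊔ G.contractSetoid M = Setoid.ker (fM M a w s) := by
  have hwn : ∀ x, x ∉ C → fM M a w s x = Quotient.mk s x := by
    intro x hx
    apply fM_n
    rintro ⟨e, he, rfl⟩; exact hx (ha e he)
  apply le_antisymm
  · refine sup_le ?_ ?_
    · intro x y hxy
      change fM M a w s x = fM M a w s y
      by_cases hx : x ∈ C
      · rw [hiso x hx y hxy]
      · by_cases hy : y ∈ C
        · rw [hiso y hy x (Setoid.symm' _ hxy)]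
        · rw [hwn x hx, hwn y hy, Quotient.sound hxy]
    · rw [gen_le]
      intro e he u v huv
      change fM M a w s u = fM M a w s v
      have he' : e ∈ M := he
      rw [hinc e he', Sym2.eq_iff] at huv
      have h1 := fM_a M a w s hinj e he'
      have h2 := hwn _ (hw e he')
      rcases huv with ⟨rfl, rfl⟩ | ⟨rfl, rfl⟩
      · rw [h1, h2]
      · rw [h1, h2]
  · have key : ∀ x, ∃ z, fM M a w s x = Quotient.mk s z ∧ (s ⊔ G.contractSetoid M) x z := by
      intro x
      by_cases h : ∃ e ∈ M, a e = x
      · obtain ⟨e, he, rfl⟩ := h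
        exact ⟨w e, fM_a M a w s hinj e he, (le_sup_right : _ ≤ s ⊔ G.contractSetoid M)
          (G.gen_rel (mem_coe.2 he) (hinc e he))⟩
      · exact ⟨x, fM_n M a w s x h, Setoid.refl' _ _⟩
    intro x y hxy
    obtain ⟨z, hz, hz'⟩ := key x
    obtain ⟨t, ht, ht'⟩ := key y
    have hzw : s z t := Quotient.exact (hz.symm.trans (Eq.trans hxy ht))
    exact Setoid.trans' _ hz' (Setoid.trans' _
      ((le_sup_left : s ≤ s ⊔ G.contractSetoid M) hzw) (Setoid.symm' _ ht'))

theorem imgM (C : Finset V) (M : Finset E) (a w : E → V)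
    (ha : ∀ e ∈ M, a e ∈ C) (hw : ∀ e ∈ M, w e ∉ C)
    (hinj : Set.InjOn a M) (s : Setoid V)
    (hiso : ∀ x ∈ C, ∀ y, s x y → x = y) :
    univ.image (fM M a w s) = (Q0 C s) ∪ (C \ M.image a).image (Quotient.mk s) := by
  ext c
  simp only [mem_image, mem_univ, true_and, mem_union, mem_sdiff]
  constructor
  · rintro ⟨x, rfl⟩
    by_cases h : ∃ e ∈ M, a e = x
    · obtain ⟨e, he, rfl⟩ := h
      rw [fM_a M a w s hinj e he, mem_Q0 C s hiso]
      exact Or.inl (hw e he)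
    · rw [fM_n M a w s x h, mem_Q0 C s hiso]
      by_cases hx : x ∈ C
      · exact Or.inr ⟨x, ⟨hx, h⟩, rfl⟩
      · exact Or.inl hx
  · rintro (h | ⟨x, ⟨_, h⟩, rfl⟩)
    · induction c using Quotient.inductionOn with | _ x =>
      rw [mem_Q0 C s hiso] at h
      refine ⟨x, fM_n M a w s x ?_⟩
      rintro ⟨e, he, rfl⟩
      exact h (ha e he)
    · exact ⟨x, fM_n M a w s x h⟩

theorem disjM (C : Finset V) (M : Finset E) (a : E → V) (s : Setoid V)
    (hiso : ∀ x ∈ C, ∀ y, s x y → x = y) :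
    Disjoint (Q0 C s) ((C \ M.image a).image (Quotient.mk s)) := by
  rw [disjoint_right]
  intro c hc
  obtain ⟨x, hx, rfl⟩ := mem_image.1 hc
  rw [mem_Q0 C s hiso, not_not]
  exact (mem_sdiff.1 hx).1

theorem rk_supM (G : Multigraph V E) (C : Finset V) (M : Finset E) (a w : E → V)
    (hinc : ∀ e ∈ M, G.inc e = s(a e, w e)) (ha : ∀ e ∈ M, a e ∈ C) (hw : ∀ e ∈ M, w e ∉ C)
    (hinj : Set.InjOn a M) (s : Setoid V)
    (hiso : ∀ x ∈ C, ∀ y, s x y → x = y) :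
    M.card + rk (s ⊔ G.contractSetoid M) = C.card + (Q0 C s).card := by
  rw [G.supM C M a w hinc ha hw hinj s hiso, rk_ker, imgM C M a w ha hw hinj s hiso,
    card_union_of_disjoint (disjM C M a s hiso), card_image_of_injOn]
  · have h1 : M.image a ⊆ C := by
      intro x hx; obtain ⟨e, he, rfl⟩ := mem_image.1 hx; exact ha e he
    have h2 := card_sdiff_add_card_eq_card h1
    rw [card_image_of_injOn hinj] at h2
    omega
  · intro x hx y _ hxy
    exact hiso x (mem_sdiff.1 (mem_coe.1 hx)).1 y (Quotient.exact hxy)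

theorem prodS_supM (G : Multigraph V E) (C : Finset V) (M : Finset E) (a w : E → V)
    (hinc : ∀ e ∈ M, G.inc e = s(a e, w e)) (ha : ∀ e ∈ M, a e ∈ C) (hw : ∀ e ∈ M, w e ∉ C)
    (hinj : Set.InjOn a M) (s : Setoid V)
    (hiso : ∀ x ∈ C, ∀ y, s x y → x = y) :
    prodS (wt C id) (s ⊔ G.contractSetoid M) =
      ∏ c ∈ Q0 C s, ((M.filter (fun e => Quotient.mk s (w e) = c)).card : ℚ) := by
  rw [G.supM C M a w hinc ha hw hinj s hiso, prodS_ker, imgM C M a w ha hw hinj s hiso,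
    prod_union (disjM C M a s hiso)]
  have h1 : ∀ c ∈ (C \ M.image a).image (Quotient.mk s), wt C id {x | fM M a w s x = c} = 1 := by
    intro c hc
    obtain ⟨x, hx, rfl⟩ := mem_image.1 hc
    simp only [mem_sdiff, mem_image] at hx
    unfold wt
    rw [Nat.cast_eq_one, card_eq_one]
    refine ⟨x, ?_⟩
    ext y
    simp only [mem_filter, mem_singleton, id, Set.mem_setOf_eq]
    constructor
    · rintro ⟨hy, hyx⟩
      by_cases h : ∃ e ∈ M, a e = y
      · obtain ⟨e, he, rfl⟩ := h
        rw [fM_a M a w s hinj e he] at hyx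
        have := hiso x hx.1 _ (Quotient.exact hyx.symm)
        exact absurd hx.1 (this ▸ hw e he)
      · rw [fM_n M a w s y h] at hyx
        exact hiso y hy _ (Quotient.exact hyx)
    · rintro rfl
      exact ⟨hx.1, fM_n M a w s y hx.2⟩
  rw [prod_congr rfl h1, prod_const_one, mul_one]
  apply prod_congr rfl
  intro c hc
  unfold wt
  congr 1
  symm
  refine card_bij (fun e _ => a e) ?_ ?_ ?_
  · intro e he
    simp only [mem_filter] at he
    simp only [mem_filter, id, Set.mem_setOf_eq]
    exact ⟨ha e he.1, (fM_a M a w s hinj e he.1).trans he.2⟩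
  · intro e he f hf hef
    exact hinj (mem_filter.1 he).1 (mem_filter.1 hf).1 hef
  · intro x hx
    simp only [mem_filter, id, Set.mem_setOf_eq] at hx
    by_cases h : ∃ e ∈ M, a e = x
    · obtain ⟨e, he, rfl⟩ := h
      rw [fM_a M a w s hinj e he] at hx
      exact ⟨e, by simp [he, hx.2], rfl⟩
    · rw [fM_n M a w s x h] at hx
      rw [← hx.2, mem_Q0 C s hiso] at hc
      exact absurd hx.1 hc

theorem clique_step [Nonempty V] (G : Multigraph V E) (C : Finset V) (hC : C.Nonempty) (S : Finset E)
    (hS : ∀ e, e ∈ S ↔ ∀ v ∈ G.inc e, v ∈ C)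
    (hu : ∀ u ∈ C, ∀ v ∈ C, u ≠ v → ∃! e : E, G.inc e = s(u, v)) (M : Finset E) (a w : E → V)
    (hinc : ∀ e ∈ M, G.inc e = s(a e, w e)) (ha : ∀ e ∈ M, a e ∈ C) (hw : ∀ e ∈ M, w e ∉ C)
    (hinj : Set.InjOn a M) (s : Setoid V)
    (hiso : ∀ x ∈ C, ∀ y, s x y → x = y) :
    (∑ Z ∈ S.powerset, if G.Tr (s ⊔ G.contractSetoid M) Z then (1 : ℚ) else 0) =
      (C.card : ℚ) ^ ((C.card : ℤ) - 2 - (M.card : ℤ)) *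
      ∑ Z ∈ M.powerset, if G.Tr (s ⊔ G.contractSetoid S) Z then (C.card : ℚ) ^ Z.card else 0 := by
  have hn0 : (C.card : ℚ) ≠ 0 := by
    have := hC.card_pos
    positivity
  obtain ⟨c₀, hc₀⟩ := id hC
  have hr1 := G.rk_supM C M a w hinc ha hw hinj s hiso
  have hr2 := G.rk_supC C hC S hS hu s hiso
  have h1 : (∑ Z ∈ S.powerset, if G.Tr (s ⊔ G.contractSetoid M) Z then (1 : ℚ) else 0) =
      G.cnt S (s ⊔ G.contractSetoid M) := by
    rw [← sum_filter]; simp [cnt]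
  have h2 : (∑ Z ∈ M.powerset, if G.Tr (s ⊔ G.contractSetoid S) Z then (C.card : ℚ) ^ Z.card else 0) =
      G.cnt M (s ⊔ G.contractSetoid S) * (C.card : ℚ) ^ (Q0 C s).card := by
    rw [← sum_filter, cnt, ← nsmul_eq_mul, ← sum_const]
    apply sum_congr rfl
    intro Z hZ
    have := (mem_filter.1 hZ).2.2
    rw [hr2] at this
    congr 1; omega
  rw [h1, h2, G.cnt_clique C hC S hS hu, G.prodS_supM C M a w hinc ha hw hinj s hiso,
    G.cnt_star c₀ M a w hinc (s ⊔ G.contractSetoid S) ?_ _ le_rfl,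
    G.prodS_supC C hC S hS hu s hiso c₀ hc₀ M w hw, mul_comm _ ((C.card : ℚ) ^ (Q0 C s).card),
    ← mul_assoc, ← zpow_natCast, ← zpow_add₀ hn0]
  · congr 2
    omega
  · intro e he
    rw [G.supC C S hS hu s hiso]
    change fC C s _ = fC C s _
    simp [fC, hc₀, ha e he]

theorem clique_step2 [Nonempty V] (G : Multigraph V E) (C : Finset V) (hC : C.Nonempty) (S : Finset E)
    (hS : ∀ e, e ∈ S ↔ ∀ v ∈ G.inc e, v ∈ C)
    (hu : ∀ u ∈ C, ∀ v ∈ C, u ≠ v → ∃! e : E, G.inc e = s(u, v)) (M : Finset E) (a w : E → V)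
    (hinc : ∀ e ∈ M, G.inc e = s(a e, w e)) (ha : ∀ e ∈ M, a e ∈ C) (hw : ∀ e ∈ M, w e ∉ C)
    (hinj : Set.InjOn a M) (s : Setoid V) (A : Finset E)
    (hiso : ∀ x ∈ C, ∀ y, s x y → x = y) (hA : ∀ e ∈ A, ∀ v ∈ G.inc e, v ∉ C) :
    (∑ Z ∈ S.powerset, if G.Tr s (A ∪ (M ∪ Z)) then (1 : ℚ) else 0) =
      (C.card : ℚ) ^ ((C.card : ℤ) - 2 - (M.card : ℤ)) *
      ∑ Z ∈ M.powerset, if G.Tr (s ⊔ G.contractSetoid S) (A ∪ Z) then (C.card : ℚ) ^ Z.card else 0 := by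
  have hAM : Disjoint A M := by
    rw [disjoint_left]
    intro e he he'
    exact hA e he (a e) (by rw [hinc e he']; simp) (ha e he')
  have hAS : Disjoint A S := by
    rw [disjoint_left]
    intro e he he'
    obtain ⟨⟨u, v⟩, huv⟩ := Sym2.mk_surjective (G.inc e)
    have : u ∈ G.inc e := by rw [← huv]; simp
    exact hA e he u this ((hS e).1 he' u this)
  have hMS : Disjoint M S := by
    rw [disjoint_left]
    intro e he he'
    exact hw e he ((hS e).1 he' _ (by rw [hinc e he]; simp))
  set t := s ⊔ G.contractSetoid A with ht
  have htiso : ∀ x ∈ C, ∀ y, t x y → x = y := by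
    let r : Setoid V := Setoid.ker (fun x => if x ∈ C then some x else none)
    have hr : t ≤ r := by
      refine sup_le ?_ ?_
      · intro x y hxy
        change (if x ∈ C then some x else none) = (if y ∈ C then some y else none)
        by_cases hx : x ∈ C
        · rw [hiso x hx y hxy]
        · by_cases hy : y ∈ C
          · rw [hiso y hy x (Setoid.symm' _ hxy)]
          · rw [if_neg hx, if_neg hy]
      · rw [gen_le]
        intro e he u v huv
        change (if u ∈ C then some u else none) = (if v ∈ C then some v else none)
        rw [if_neg (hA e he u (by rw [huv]; simp)), if_neg (hA e he v (by rw [huv]; simp))]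
    intro x hx y hxy
    have := hr hxy
    change (if x ∈ C then some x else none) = (if y ∈ C then some y else none) at this
    rw [if_pos hx] at this
    split_ifs at this
    exact Option.some.inj this
  have hrt := G.rk_supC C hC S hS hu t htiso
  have hrs := G.rk_supC C hC S hS hu s hiso
  have hit := rk_iso C t htiso
  have his := rk_iso C s hiso
  have hM := G.rk_supM C M a w hinc ha hw hinj t htiso
  have hcomm : s ⊔ G.contractSetoid S ⊔ G.contractSetoid A = t ⊔ G.contractSetoid S := by
    rw [ht, sup_right_comm]
  have h1 : ∀ Z ∈ S.powerset, (if G.Tr s (A ∪ (M ∪ Z)) then (1 : ℚ) else 0) =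
      if G.Fst s A then (if G.Tr (t ⊔ G.contractSetoid M) Z then (1 : ℚ) else 0) else 0 := by
    intro Z hZ
    have hZ' := mem_powerset.1 hZ
    rw [G.tr_union s A (M ∪ Z) (disjoint_union_right.2 ⟨hAM, hAS.mono_right hZ'⟩),
      G.tr_union t M Z (hMS.mono_right hZ')]
    have : G.Fst t M := by unfold Fst; omega
    simp only [this, true_and]
    split_ifs <;> tauto
  have h2 : ∀ Z ∈ M.powerset, (if G.Tr (s ⊔ G.contractSetoid S) (A ∪ Z) then (C.card : ℚ) ^ Z.card else 0) =
      if G.Fst s A then (if G.Tr (t ⊔ G.contractSetoid S) Z then (C.card : ℚ) ^ Z.card else 0) else 0 := by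
    intro Z hZ
    rw [G.tr_union _ A Z (hAM.mono_right (mem_powerset.1 hZ)), hcomm]
    have : G.Fst (s ⊔ G.contractSetoid S) A ↔ G.Fst s A := by
      unfold Fst
      rw [hcomm, ← ht]
      omega
    rw [this]
    split_ifs <;> tauto
  rw [sum_congr rfl h1, sum_congr rfl h2]
  by_cases hf : G.Fst s A
  · simp only [hf, if_true]
    exact G.clique_step C hC S hS hu M a w hinc ha hw hinj t htiso
  · simp [hf]

theorem sum_powerset_union {α : Type*} (P R : Finset α) (h : Disjoint P R) (g : Finset α → ℚ) :
    ∑ X ∈ (P ∪ R).powerset, g X = ∑ A ∈ P.powerset, ∑ Y ∈ R.powerset, g (A ∪ Y) := by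
  rw [← sum_product']
  refine sum_bij' (fun X _ => (X ∩ P, X ∩ R)) (fun p _ => p.1 ∪ p.2) ?_ ?_ ?_ ?_ ?_
  · intro X hX; simp
  · rintro ⟨A, B⟩ hp
    simp only [mem_product, mem_powerset] at hp ⊢
    exact union_subset_union hp.1 hp.2
  · intro X hX
    simp only [mem_powerset] at hX ⊢
    rw [← inter_union_distrib_left, inter_eq_left.2 hX]
  · rintro ⟨A, B⟩ hp
    simp only [mem_product, mem_powerset] at hp ⊢
    rw [disjoint_left] at h
    ext x
    · simp only [mem_inter, mem_union]
      constructor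
      · rintro ⟨h1 | h1, h2⟩
        · exact h1
        · exact absurd (hp.2 h1) (h h2)
      · intro h1; exact ⟨Or.inl h1, hp.1 h1⟩
    · simp only [mem_inter, mem_union]
      constructor
      · rintro ⟨h1 | h1, h2⟩
        · exact absurd h2 (h (hp.1 h1))
        · exact h1
      · intro h1; exact ⟨Or.inr h1, hp.2 h1⟩
  · intro X hX
    simp only [mem_powerset] at hX ⊢
    rw [← inter_union_distrib_left, inter_eq_left.2 hX]

def gcond {k : ℕ} (G : Multigraph V E) (Sf Mf : Fin k → Finset E)
    (N : Finset E) (J : Finset (Fin k)) (X : Finset E) : Prop :=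
  G.Tr (G.contractSetoid (⋃ j ∈ J, (Sf j : Set E))) X ∧ N ⊆ X ∧ (∀ j, j ∉ J → Mf j ⊆ X) ∧
    (∀ j ∈ J, Disjoint X (Sf j))

noncomputable def gJ {k : ℕ} (G : Multigraph V E) (Cf : Fin k → Finset V) (Sf Mf : Fin k → Finset E)
    (N : Finset E) (J : Finset (Fin k)) (X : Finset E) : ℚ :=
  if gcond G Sf Mf N J X then ∏ j ∈ J, ((Cf j).card : ℚ) ^ (X ∩ Mf j).card else 0

theorem sub_aux {α : Type*} {D A R : Finset α} (h : Disjoint D R) : D ⊆ A ∪ R ↔ D ⊆ A := by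
  rw [disjoint_left] at h
  constructor
  · intro h1 x hx
    exact (mem_union.1 (h1 hx)).resolve_right (h hx)
  · intro h1; exact h1.trans subset_union_left

theorem main_step [Nonempty V] {k : ℕ} (G : Multigraph V E) (Cf : Fin k → Finset V)
    (Sf Mf : Fin k → Finset E)
    (N : Finset E) (J : Finset (Fin k)) (i : Fin k) (hi : i ∉ J) (a w : E → V)
    (hC : ∀ i, (Cf i).Nonempty)
    (hS : ∀ i e, e ∈ Sf i ↔ ∀ v ∈ G.inc e, v ∈ Cf i)
    (hu : ∀ i, ∀ u ∈ Cf i, ∀ v ∈ Cf i, u ≠ v → ∃! e : E, G.inc e = s(u, v))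
    (hinc : ∀ i, ∀ e ∈ Mf i, G.inc e = s(a e, w e)) (ha : ∀ i, ∀ e ∈ Mf i, a e ∈ Cf i)
    (hw : ∀ i, ∀ e ∈ Mf i, w e ∉ Cf i) (hinj : ∀ i, Set.InjOn a (Mf i))
    (htouch : ∀ i e v, v ∈ G.inc e → v ∈ Cf i → e ∈ Sf i ∨ e ∈ Mf i)
    (hCC : ∀ i j, i ≠ j → Disjoint (Cf i) (Cf j))
    (hSM : ∀ i j, Disjoint (Sf i) (Mf j)) (hSS : ∀ i j, i ≠ j → Disjoint (Sf i) (Sf j))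
    (hMM : ∀ i j, i ≠ j → Disjoint (Mf i) (Mf j)) (hNS : ∀ i, Disjoint N (Sf i))
    (hNM : ∀ i, Disjoint N (Mf i)) :
    ∑ X : Finset E, gJ G Cf Sf Mf N J X =
      ((Cf i).card : ℚ) ^ (((Cf i).card : ℤ) - 2 - ((Mf i).card : ℤ)) *
      ∑ X : Finset E, gJ G Cf Sf Mf N (insert i J) X := by
  set P : Finset E := univ \ (Sf i ∪ Mf i) with hP
  have hdec : ∀ g : Finset E → ℚ, ∑ X : Finset E, g X =
      ∑ A ∈ P.powerset, ∑ Z ∈ (Sf i).powerset, ∑ Y ∈ (Mf i).powerset, g (A ∪ (Z ∪ Y)) := by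
    intro g
    rw [← powerset_univ]
    have : (univ : Finset E) = P ∪ (Sf i ∪ Mf i) := by
      rw [hP, sdiff_union_of_subset (subset_univ _)]
    conv_lhs => rw [this]
    rw [sum_powerset_union _ _ sdiff_disjoint]
    apply sum_congr rfl
    intro A _
    rw [sum_powerset_union _ _ (hSM i i) (fun Y => g (A ∪ Y))]
  set s := G.contractSetoid (⋃ j ∈ J, (Sf j : Set E)) with hs
  have hs' : G.contractSetoid (⋃ j ∈ insert i J, (Sf j : Set E)) = s ⊔ G.contractSetoid (Sf i) := by
    rw [hs, ← gen_union, Finset.set_biUnion_insert, Set.union_comm]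
  have hiso : ∀ x ∈ Cf i, ∀ y, s x y → x = y := by
    let r : Setoid V := Setoid.ker (fun x => if x ∈ Cf i then some x else none)
    have hr : s ≤ r := by
      rw [hs, gen_le]
      intro e he u v huv
      simp only [Set.mem_iUnion, mem_coe] at he
      obtain ⟨j, hj, he⟩ := he
      have hij : j ≠ i := by rintro rfl; exact hi hj
      have hd := disjoint_left.1 (hCC j i hij)
      change (if u ∈ Cf i then some u else none) = (if v ∈ Cf i then some v else none)
      rw [if_neg (hd ((hS j e).1 he u (by rw [huv]; simp))),
        if_neg (hd ((hS j e).1 he v (by rw [huv]; simp)))]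
    intro x hx y hxy
    have := hr hxy
    change (if x ∈ Cf i then some x else none) = (if y ∈ Cf i then some y else none) at this
    rw [if_pos hx] at this
    split_ifs at this
    exact Option.some.inj this
  rw [hdec, hdec, mul_sum]
  apply sum_congr rfl
  intro A hA
  have hA' : Disjoint A (Sf i ∪ Mf i) := by
    rw [mem_powerset] at hA
    exact (sdiff_disjoint).mono_left hA
  obtain ⟨hAS, hAM⟩ := disjoint_union_right.1 hA'
  have hAC : ∀ e ∈ A, ∀ v ∈ G.inc e, v ∉ Cf i := by
    intro e he v hv hvC
    rcases htouch i e v hv hvC with h | h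
    · exact disjoint_left.1 hAS he h
    · exact disjoint_left.1 hAM he h
  set cA : Prop := N ⊆ A ∧ (∀ j, j ∉ insert i J → Mf j ⊆ A) ∧ (∀ j ∈ J, Disjoint A (Sf j)) with hcA
  set W : ℚ := ∏ j ∈ J, ((Cf j).card : ℚ) ^ (A ∩ Mf j).card with hW
  have hne : ∀ j ∈ J, i ≠ j := by rintro j hj rfl; exact hi hj
  have hdN : ∀ Z ⊆ Sf i, ∀ Y ⊆ Mf i, Disjoint N (Z ∪ Y) := fun Z hZ Y hY =>
    disjoint_union_right.2 ⟨(hNS i).mono_right hZ, (hNM i).mono_right hY⟩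
  have hdM : ∀ Z ⊆ Sf i, ∀ Y ⊆ Mf i, ∀ j, i ≠ j → Disjoint (Mf j) (Z ∪ Y) := fun Z hZ Y hY j hj =>
    disjoint_union_right.2 ⟨((hSM i j).mono_left hZ).symm, ((hMM i j hj).mono_left hY).symm⟩
  have hdS : ∀ Z ⊆ Sf i, ∀ Y ⊆ Mf i, ∀ j, i ≠ j → Disjoint (Z ∪ Y) (Sf j) := fun Z hZ Y hY j hj =>
    disjoint_union_left.2 ⟨((hSS i j hj).mono_left hZ), ((hSM j i).mono_right hY).symm⟩
  have hWt : ∀ Z ⊆ Sf i, ∀ Y ⊆ Mf i,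
      ∏ j ∈ J, ((Cf j).card : ℚ) ^ ((A ∪ (Z ∪ Y)) ∩ Mf j).card = W := by
    intro Z hZ Y hY
    apply prod_congr rfl
    intro j hj
    rw [union_inter_distrib_right, disjoint_iff_inter_eq_empty.1 (hdM Z hZ Y hY j (hne j hj)).symm,
      union_empty]
  have g1 : ∀ Z ∈ (Sf i).powerset, ∀ Y ∈ (Mf i).powerset, gJ G Cf Sf Mf N J (A ∪ (Z ∪ Y)) =
      if Y = Mf i then (if cA then W * (if G.Tr s (A ∪ (Mf i ∪ Z)) then 1 else 0) else 0) else 0 := by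
    intro Z hZ Y hY
    rw [mem_powerset] at hZ hY
    unfold gJ
    rw [hWt Z hZ Y hY]
    have e1 : (∀ j, j ∉ J → Mf j ⊆ A ∪ (Z ∪ Y)) ↔
        Y = Mf i ∧ (∀ j, j ∉ insert i J → Mf j ⊆ A) := by
      constructor
      · intro h
        constructor
        · apply subset_antisymm hY
          have h1 := h i hi
          rwa [union_comm A, union_comm Z, union_assoc, sub_aux] at h1
          exact disjoint_union_right.2 ⟨((hSM i i).mono_left hZ).symm, hAM.symm⟩
        · intro j hj
          rw [mem_insert, not_or] at hj
          exact (sub_aux (hdM Z hZ Y hY j (Ne.symm hj.1))).1 (h j hj.2)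
      · rintro ⟨rfl, h⟩ j hj
        by_cases hji : j = i
        · subst hji; exact subset_union_right.trans subset_union_right
        · exact (h j (by simp [hji, hj])).trans subset_union_left
    have e2 : (∀ j ∈ J, Disjoint (A ∪ (Z ∪ Y)) (Sf j)) ↔ (∀ j ∈ J, Disjoint A (Sf j)) := by
      constructor
      · intro h j hj; exact (disjoint_union_left.1 (h j hj)).1
      · intro h j hj; exact disjoint_union_left.2 ⟨h j hj, hdS Z hZ Y hY j (hne j hj)⟩
    have hiff : gcond G Sf Mf N J (A ∪ (Z ∪ Y)) ↔ G.Tr s (A ∪ (Z ∪ Y)) ∧ N ⊆ A ∧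
        (Y = Mf i ∧ (∀ j, j ∉ insert i J → Mf j ⊆ A)) ∧ (∀ j ∈ J, Disjoint A (Sf j)) := by
      unfold gcond
      rw [sub_aux (hdN Z hZ Y hY), e1, e2]
    by_cases hYM : Y = Mf i
    · have hcomm : A ∪ (Z ∪ Y) = A ∪ (Mf i ∪ Z) := by rw [hYM, union_comm Z]
      rw [if_pos hYM]
      by_cases hc : cA
      · rw [if_pos hc]
        by_cases ht : G.Tr s (A ∪ (Mf i ∪ Z))
        · rw [if_pos ht, if_pos (hiff.2 ⟨hcomm ▸ ht, hc.1, ⟨hYM, hc.2.1⟩, hc.2.2⟩), mul_one]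
        · rw [if_neg ht, if_neg (fun h => ht (hcomm ▸ (hiff.1 h).1)), mul_zero]
      · rw [if_neg hc, if_neg]
        intro h
        obtain ⟨_, h1, ⟨_, h2⟩, h3⟩ := hiff.1 h
        exact hc ⟨h1, h2, h3⟩
    · rw [if_neg hYM, if_neg]
      exact fun h => hYM (hiff.1 h).2.2.1.1
  have g2 : ∀ Z ∈ (Sf i).powerset, ∀ Y ∈ (Mf i).powerset,
      gJ G Cf Sf Mf N (insert i J) (A ∪ (Z ∪ Y)) =
      if Z = ∅ then (if cA then W * (if G.Tr (s ⊔ G.contractSetoid (Sf i)) (A ∪ Y) then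
        ((Cf i).card : ℚ) ^ Y.card else 0) else 0) else 0 := by
    intro Z hZ Y hY
    rw [mem_powerset] at hZ hY
    unfold gJ
    rw [prod_insert hi, hWt Z hZ Y hY]
    have e0 : (A ∪ (Z ∪ Y)) ∩ Mf i = Y := by
      rw [union_inter_distrib_right, union_inter_distrib_right, inter_eq_left.2 hY,
        disjoint_iff_inter_eq_empty.1 hAM, disjoint_iff_inter_eq_empty.1 ((hSM i i).mono_left hZ)]
      simp
    rw [e0]
    have e1 : (∀ j, j ∉ insert i J → Mf j ⊆ A ∪ (Z ∪ Y)) ↔ (∀ j, j ∉ insert i J → Mf j ⊆ A) := by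
      refine forall_congr' fun j => imp_congr_right fun hj => ?_
      rw [mem_insert, not_or] at hj
      exact sub_aux (hdM Z hZ Y hY j (Ne.symm hj.1))
    have e2 : (∀ j ∈ insert i J, Disjoint (A ∪ (Z ∪ Y)) (Sf j)) ↔
        Z = ∅ ∧ (∀ j ∈ J, Disjoint A (Sf j)) := by
      constructor
      · intro h
        constructor
        · have h1 := h i (mem_insert_self _ _)
          rw [disjoint_union_left, disjoint_union_left] at h1
          exact disjoint_self_iff_empty Z |>.1 (h1.2.1.mono_right hZ)
        · intro j hj; exact (disjoint_union_left.1 (h j (mem_insert_of_mem hj))).1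
      · rintro ⟨rfl, h⟩ j hj
        rcases mem_insert.1 hj with rfl | hj
        · refine disjoint_union_left.2 ⟨hAS, ?_⟩
          rw [empty_union]
          exact ((hSM j j).mono_right hY).symm
        · exact disjoint_union_left.2 ⟨h j hj, hdS ∅ hZ Y hY j (hne j hj)⟩
    have hiff : gcond G Sf Mf N (insert i J) (A ∪ (Z ∪ Y)) ↔
        G.Tr (s ⊔ G.contractSetoid (Sf i)) (A ∪ (Z ∪ Y)) ∧ N ⊆ A ∧
        (∀ j, j ∉ insert i J → Mf j ⊆ A) ∧ (Z = ∅ ∧ ∀ j ∈ J, Disjoint A (Sf j)) := by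
      unfold gcond
      rw [hs', sub_aux (hdN Z hZ Y hY), e1, e2]
    by_cases hZ0 : Z = ∅
    · have hcomm : A ∪ (Z ∪ Y) = A ∪ Y := by rw [hZ0, empty_union]
      rw [if_pos hZ0]
      by_cases hc : cA
      · rw [if_pos hc]
        by_cases ht : G.Tr (s ⊔ G.contractSetoid (Sf i)) (A ∪ Y)
        · rw [if_pos ht, if_pos (hiff.2 ⟨hcomm ▸ ht, hc.1, hc.2.1, hZ0, hc.2.2⟩), mul_comm]
        · rw [if_neg ht, if_neg (fun h => ht (hcomm ▸ (hiff.1 h).1)), mul_zero]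
      · rw [if_neg hc, if_neg]
        intro h
        obtain ⟨_, h1, h2, _, h3⟩ := hiff.1 h
        exact hc ⟨h1, h2, h3⟩
    · rw [if_neg hZ0, if_neg]
      exact fun h => hZ0 (hiff.1 h).2.2.2.1
  have s1 : ∑ Z ∈ (Sf i).powerset, ∑ Y ∈ (Mf i).powerset, gJ G Cf Sf Mf N J (A ∪ (Z ∪ Y)) =
      if cA then W * ∑ Z ∈ (Sf i).powerset, (if G.Tr s (A ∪ (Mf i ∪ Z)) then (1 : ℚ) else 0) else 0 := by
    rw [sum_congr rfl (fun Z hZ => sum_congr rfl (g1 Z hZ))]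
    have : ∀ Z ∈ (Sf i).powerset, (∑ Y ∈ (Mf i).powerset, if Y = Mf i then
        (if cA then W * (if G.Tr s (A ∪ (Mf i ∪ Z)) then 1 else 0) else 0) else 0) =
        if cA then W * (if G.Tr s (A ∪ (Mf i ∪ Z)) then 1 else 0) else 0 := by
      intro Z _
      rw [sum_ite_eq', if_pos (by simp)]
    rw [sum_congr rfl this]
    by_cases hc : cA
    · simp only [if_pos hc]; rw [mul_sum]
    · simp only [if_neg hc]; simp
  have s2 : ∑ Z ∈ (Sf i).powerset, ∑ Y ∈ (Mf i).powerset, gJ G Cf Sf Mf N (insert i J) (A ∪ (Z ∪ Y)) =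
      if cA then W * ∑ Y ∈ (Mf i).powerset, (if G.Tr (s ⊔ G.contractSetoid (Sf i)) (A ∪ Y) then
        ((Cf i).card : ℚ) ^ Y.card else 0) else 0 := by
    rw [sum_congr rfl (fun Z hZ => sum_congr rfl (g2 Z hZ)), sum_comm]
    have : ∀ Y ∈ (Mf i).powerset, (∑ Z ∈ (Sf i).powerset, if Z = ∅ then
        (if cA then W * (if G.Tr (s ⊔ G.contractSetoid (Sf i)) (A ∪ Y) then
        ((Cf i).card : ℚ) ^ Y.card else 0) else 0) else 0) =
        if cA then W * (if G.Tr (s ⊔ G.contractSetoid (Sf i)) (A ∪ Y) then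
        ((Cf i).card : ℚ) ^ Y.card else 0) else 0 := by
      intro Y _
      rw [sum_ite_eq', if_pos (by simp)]
    rw [sum_congr rfl this]
    by_cases hc : cA
    · simp only [if_pos hc]; rw [mul_sum]
    · simp only [if_neg hc]; simp
  rw [s1, s2, G.clique_step2 (Cf i) (hC i) (Sf i) (hS i) (hu i) (Mf i) a w (hinc i) (ha i) (hw i)
    (hinj i) s A hiso hAC]
  split_ifs
  · ring
  · simp

theorem main_ind [Nonempty V] {k : ℕ} (G : Multigraph V E) (Cf : Fin k → Finset V)
    (Sf Mf : Fin k → Finset E)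
    (N : Finset E) (a w : E → V)
    (hC : ∀ i, (Cf i).Nonempty)
    (hS : ∀ i e, e ∈ Sf i ↔ ∀ v ∈ G.inc e, v ∈ Cf i)
    (hu : ∀ i, ∀ u ∈ Cf i, ∀ v ∈ Cf i, u ≠ v → ∃! e : E, G.inc e = s(u, v))
    (hinc : ∀ i, ∀ e ∈ Mf i, G.inc e = s(a e, w e)) (ha : ∀ i, ∀ e ∈ Mf i, a e ∈ Cf i)
    (hw : ∀ i, ∀ e ∈ Mf i, w e ∉ Cf i) (hinj : ∀ i, Set.InjOn a (Mf i))
    (htouch : ∀ i e v, v ∈ G.inc e → v ∈ Cf i → e ∈ Sf i ∨ e ∈ Mf i)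
    (hCC : ∀ i j, i ≠ j → Disjoint (Cf i) (Cf j))
    (hSM : ∀ i j, Disjoint (Sf i) (Mf j)) (hSS : ∀ i j, i ≠ j → Disjoint (Sf i) (Sf j))
    (hMM : ∀ i j, i ≠ j → Disjoint (Mf i) (Mf j)) (hNS : ∀ i, Disjoint N (Sf i))
    (hNM : ∀ i, Disjoint N (Mf i)) (J : Finset (Fin k)) :
    ∑ X : Finset E, gJ G Cf Sf Mf N ∅ X =
      (∏ i ∈ J, ((Cf i).card : ℚ) ^ (((Cf i).card : ℤ) - 2 - ((Mf i).card : ℤ))) *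
      ∑ X : Finset E, gJ G Cf Sf Mf N J X := by
  induction J using Finset.induction_on with
  | empty => simp
  | insert i J hi ih =>
    rw [ih, main_step G Cf Sf Mf N J i hi a w hC hS hu hinc ha hw hinj htouch hCC hSM hSS hMM hNS hNM,
      prod_insert hi]
    ring

theorem conn_iff (G : Multigraph V E) (T : Set E) :
    G.ConnectedOn T ↔ G.contractSetoid T = ⊤ := by
  constructor
  · intro h
    rw [eq_top_iff]
    intro x y _
    exact h x y
  · intro h x y
    have : G.contractSetoid T x y := by rw [h]; trivial
    exact this

theorem conn_contract (G : Multigraph V E) (W : Set E) (X : Set E) (hX : Disjoint X W) :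
    (G.contract W).ConnectedOn (Subtype.val ⁻¹' X) ↔
      G.contractSetoid W ⊔ G.contractSetoid X = ⊤ := by
  rw [conn_iff]
  constructor
  · intro h
    have key : ∀ p q : Quotient (G.contractSetoid W),
        (G.contract W).contractSetoid (Subtype.val ⁻¹' X) p q →
        ∀ x y, Quotient.mk _ x = p → Quotient.mk _ y = q →
          (G.contractSetoid W ⊔ G.contractSetoid X) x y := by
      intro p q hpq
      change Relation.ReflTransGen _ p q at hpq
      induction hpq with
      | refl =>
        intro x y hx hy
        exact (le_sup_left : _ ≤ G.contractSetoid W ⊔ G.contractSetoid X)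
          (Quotient.exact (hx.trans hy.symm))
      | tail _ h2 ih =>
        rename_i b c _
        intro x y hx hy
        obtain ⟨e, he, h2⟩ := h2
        obtain ⟨u, v, huv⟩ : ∃ u v, G.inc e.1 = s(u, v) := by
          induction h : G.inc e.1 using Sym2.ind with | _ u v => exact ⟨u, v, rfl⟩
        have huv' : (G.contractSetoid W ⊔ G.contractSetoid X) u v :=
          (le_sup_right : _ ≤ G.contractSetoid W ⊔ G.contractSetoid X) (G.gen_rel he huv)
        have h3 : s(Quotient.mk (G.contractSetoid W) u, Quotient.mk (G.contractSetoid W) v) = s(b, c) := by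
          rw [← h2]
          change _ = (G.inc e.1).map _
          rw [huv]; rfl
        have lW : ∀ {x y : V}, Quotient.mk (G.contractSetoid W) x = Quotient.mk _ y →
            (G.contractSetoid W ⊔ G.contractSetoid X) x y := fun h =>
          (le_sup_left : _ ≤ G.contractSetoid W ⊔ G.contractSetoid X) (Quotient.exact h)
        rcases Sym2.eq_iff.1 h3 with ⟨h4, h5⟩ | ⟨h4, h5⟩
        · exact Setoid.trans' _ (ih x u hx h4) (Setoid.trans' _ huv' (lW (h5.trans hy.symm)))
        · exact Setoid.trans' _ (ih x v hx h5)
            (Setoid.trans' _ (Setoid.symm' _ huv') (lW (h4.trans hy.symm)))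
    rw [eq_top_iff]
    intro x y _
    exact key _ _ (by rw [h]; trivial) x y rfl rfl
  · intro h
    have hle : G.contractSetoid W ⊔ G.contractSetoid X ≤
        Setoid.comap (Quotient.mk (G.contractSetoid W))
          ((G.contract W).contractSetoid (Subtype.val ⁻¹' X)) := by
      apply sup_le
      · intro x y hxy
        have : Quotient.mk (G.contractSetoid W) x = Quotient.mk _ y := Quotient.sound hxy
        change ((G.contract W).contractSetoid (Subtype.val ⁻¹' X)) (Quotient.mk _ x) (Quotient.mk _ y)
        rw [this]
      · rw [gen_le]
        intro e he u v huv
        have heW : e ∉ W := Set.disjoint_left.1 hX he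
        refine (G.contract W).gen_rel (e := ⟨e, heW⟩) he ?_
        change (G.inc e).map _ = _
        rw [huv]; rfl
    rw [eq_top_iff]
    intro p q _
    induction p using Quotient.inductionOn with | _ x =>
    induction q using Quotient.inductionOn with | _ y =>
    have h1 : (G.contractSetoid W ⊔ G.contractSetoid X) x y := by rw [h]; trivial
    exact hle h1

theorem st_contract (G : Multigraph V E) (W : Set E) (X : Finset E) (hX : Disjoint (X : Set E) W) :
    (G.contract W).IsSpanningTree (Subtype.val ⁻¹' (X : Set E)) ↔ G.Tr (G.contractSetoid W) X := by
  unfold IsSpanningTree Tr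
  rw [conn_contract G W _ hX, rk_nat]
  have : (Subtype.val ⁻¹' (X : Set E) : Set {e // e ∉ W}).ncard = X.card := by
    rw [Set.ncard_preimage_of_injective_subset_range Subtype.val_injective, Set.ncard_coe_finset]
    intro e he
    exact ⟨⟨e, Set.disjoint_left.1 hX he⟩, rfl⟩
  rw [this]

theorem st_plain (G : Multigraph V E) (X : Finset E) :
    G.IsSpanningTree (X : Set E) ↔ G.Tr ⊥ X := by
  unfold IsSpanningTree Tr
  rw [conn_iff, bot_sup_eq, rk_nat, Set.ncard_coe_finset]
  have : Nat.card (Quotient (⊥ : Setoid V)) = Nat.card V := by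
    refine Nat.card_congr (Equiv.ofBijective (Quotient.mk (⊥ : Setoid V)) ⟨?_, ?_⟩).symm
    · intro x y h
      exact Quotient.exact h
    · exact Quotient.mk_surjective
  rw [this]

theorem tau_eq {k : ℕ} (G : Multigraph V E) (Cf : Fin k → Finset V) (Sf Mf : Fin k → Finset E)
    (N : Finset E) :
    (G.tau ((⋃ i, (Mf i : Set E)) ∪ N) : ℚ) = ∑ X : Finset E, gJ G Cf Sf Mf N ∅ X := by
  have h1 : ∀ X : Finset E, gJ G Cf Sf Mf N ∅ X =
      if gcond G Sf Mf N ∅ X then 1 else 0 := by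
    intro X; unfold gJ; simp
  rw [sum_congr rfl (fun X _ => h1 X), sum_boole]
  congr 1
  unfold tau
  rw [← Set.ncard_coe_finset]
  symm
  refine Set.ncard_congr (fun X _ => (X : Set E)) ?_ ?_ ?_
  · intro X hX
    simp only [coe_filter, mem_univ, true_and, Set.mem_setOf_eq] at hX
    obtain ⟨h1, h2, h3, _⟩ := hX
    refine ⟨(st_plain G X).2 ?_, ?_⟩
    · simpa [gen_empty] using h1
    · apply Set.union_subset
      · exact Set.iUnion_subset fun i => coe_subset.2 (h3 i (by simp))
      · exact coe_subset.2 h2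
  · intro X Y _ _ h; exact coe_injective h
  · rintro T ⟨h1, h2⟩
    refine ⟨T.toFinset, ?_, by simp⟩
    simp only [coe_filter, mem_univ, true_and, Set.mem_setOf_eq]
    have hT : ((T.toFinset : Finset E) : Set E) = T := by simp
    rw [← hT, st_plain] at h1
    rw [Set.union_subset_iff, Set.iUnion_subset_iff] at h2
    refine ⟨by simpa [gen_empty] using h1, ?_, ?_, by simp⟩
    · rw [← coe_subset, hT]; exact h2.2
    · intro j _; rw [← coe_subset, hT]; exact h2.1 j

theorem rhs_eq {k : ℕ} (G : Multigraph V E) (Cf : Fin k → Finset V) (Sf Mf : Fin k → Finset E)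
    (N : Finset E) (W : Set E) (hW : W = ⋃ i, (Sf i : Set E)) (hNS : ∀ i, Disjoint N (Sf i))
    (F : Set {e // e ∉ W} → ℚ)
    (hF : ∀ X : Finset E, Disjoint (X : Set E) W →
      F (Subtype.val ⁻¹' (X : Set E)) = ∏ j, ((Cf j).card : ℚ) ^ (X ∩ Mf j).card) :
    ∑ᶠ T ∈ (G.contract W).ST (Subtype.val ⁻¹' (N : Set E)), F T =
      ∑ X : Finset E, gJ G Cf Sf Mf N univ X := by
  have hdis : ∀ X : Finset E, Disjoint (X : Set E) W ↔ ∀ j, Disjoint X (Sf j) := by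
    intro X
    rw [hW, Set.disjoint_iUnion_right]
    simp only [disjoint_coe]
  have hc : ∀ X, gcond G Sf Mf N univ X ↔ G.Tr (G.contractSetoid W) X ∧ N ⊆ X ∧
      Disjoint (X : Set E) W := by
    intro X
    rw [hdis]
    unfold gcond
    simp [hW]
  have : ∑ X : Finset E, gJ G Cf Sf Mf N univ X =
      ∑ X ∈ univ.filter (fun X => gcond G Sf Mf N univ X),
        ∏ j, ((Cf j).card : ℚ) ^ (X ∩ Mf j).card := by
    rw [sum_filter]; rfl
  rw [this, ← finsum_mem_coe_finset]
  symm
  refine finsum_mem_eq_of_bijOn (fun X : Finset E => Subtype.val ⁻¹' (X : Set E)) ⟨?_, ?_, ?_⟩ ?_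
  · intro X hX
    simp only [coe_filter, mem_univ, true_and, Set.mem_setOf_eq] at hX
    rw [hc] at hX
    exact ⟨(st_contract G W X hX.2.2).2 hX.1, Set.preimage_mono (coe_subset.2 hX.2.1)⟩
  · intro X hX Y hY h
    simp only [coe_filter, mem_univ, true_and, Set.mem_setOf_eq] at hX hY
    rw [hc] at hX hY
    have hr : ∀ Z : Finset E, Disjoint (Z : Set E) W →
        (Z : Set E) ⊆ Set.range (Subtype.val : {e // e ∉ W} → E) := by
      intro Z hZ e he
      exact ⟨⟨e, Set.disjoint_left.1 hZ he⟩, rfl⟩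
    exact coe_injective ((Set.preimage_eq_preimage' (hr X hX.2.2) (hr Y hY.2.2)).1 h)
  · rintro T ⟨h1, h2⟩
    set X : Finset E := (Subtype.val '' T).toFinset with hX
    have hXT : (X : Set E) = Subtype.val '' T := by simp [hX]
    have hpre : Subtype.val ⁻¹' (X : Set E) = T := by
      rw [hXT, Set.preimage_image_eq _ Subtype.val_injective]
    have hd : Disjoint (X : Set E) W := by
      rw [hXT, Set.disjoint_left]
      rintro _ ⟨e, _, rfl⟩
      exact e.2
    refine ⟨X, ?_, hpre⟩
    simp only [coe_filter, mem_univ, true_and, Set.mem_setOf_eq]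
    rw [hc]
    refine ⟨(st_contract G W X hd).1 (hpre ▸ h1), ?_, hd⟩
    intro e he
    have heW : e ∉ W := Set.disjoint_left.1 ((hdis N).2 hNS) he
    have := h2 (show (⟨e, heW⟩ : {e // e ∉ W}) ∈ _ from he)
    rw [← mem_coe, hXT]
    exact ⟨_, this, rfl⟩
  · intro X hX
    simp only [coe_filter, mem_univ, true_and, Set.mem_setOf_eq] at hX
    rw [hc] at hX
    exact (hF X hX.2.2).symm

theorem final
    (G : Multigraph V E)
    (k : ℕ) (part : V → Option (Fin k))
    (hne : ∀ i : Option (Fin k), (part ⁻¹' {i}).Nonempty)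
    (hclique : ∀ i : Fin k, G.IsClique (part ⁻¹' {some i}))
    (hbetween : ∀ i j : Fin k, i ≠ j →
      G.edgesBetween (part ⁻¹' {some i}) (part ⁻¹' {some j}) = ∅)
    (Mi : Fin k → Set E)
    (hMi : ∀ i, Mi i = G.edgesBetween (part ⁻¹' {some i}) (part ⁻¹' {none}))
    (M : Set E) (hM : M = ⋃ i, Mi i)
    (hstar : G.StarComponents M (part ⁻¹' {none}))
    (U : Set V) (hU : U = ⋃ i, part ⁻¹' {some i})
    (rep : Fin k → V) (hrep : ∀ i, rep i ∈ part ⁻¹' {some i})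
    (N : Set E) (hN : N ⊆ G.edgesWithin (part ⁻¹' {none})) :
    (G.tau (M ∪ N) : ℚ) =
      (∏ i, ((part ⁻¹' {some i}).ncard : ℚ) ^
        (((part ⁻¹' {some i}).ncard : ℤ) - 2 - ((Mi i).ncard : ℤ))) *
      ∑ᶠ T ∈ (G.contract (G.edgesWithin U)).ST (Subtype.val ⁻¹' N),
        ∏ i, ((part ⁻¹' {some i}).ncard : ℚ) ^
          ({e ∈ T | Quotient.mk (G.contractSetoid (G.edgesWithin U)) (rep i) ∈
            (G.contract (G.edgesWithin U)).inc e}).ncard := by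
  haveI : Nonempty V := ⟨(hne none).some⟩
  set Cf : Fin k → Finset V := fun i => univ.filter (fun v => part v = some i) with hCf
  set Sf : Fin k → Finset E := fun i =>
    univ.filter (fun e => ∀ v ∈ G.inc e, part v = some i) with hSf
  set Mf : Fin k → Finset E := fun i => (Mi i).toFinset with hMf
  set Nf : Finset E := N.toFinset with hNf
  have mC : ∀ i v, v ∈ Cf i ↔ part v = some i := by intro i v; simp [hCf]
  have mS : ∀ i e, e ∈ Sf i ↔ ∀ v ∈ G.inc e, part v = some i := by intro i e; simp [hSf]
  have mM : ∀ i e, e ∈ Mf i ↔ ∃ u v, G.inc e = s(u, v) ∧ part u = some i ∧ part v = none := by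
    intro i e; simp only [hMf, Set.mem_toFinset, hMi]; rfl
  have mN : ∀ e ∈ Nf, ∀ v ∈ G.inc e, part v = none := by
    intro e he; exact hN (Set.mem_toFinset.1 he)
  have cC : ∀ i, (part ⁻¹' {some i}).ncard = (Cf i).card := by
    intro i; rw [← Set.ncard_coe_finset]; congr 1; ext v; simp [hCf]
  have cMf : ∀ i, (Mf i : Set E) = Mi i := by intro i; simp [hMf]
  have cM : ∀ i, (Mi i).ncard = (Mf i).card := by
    intro i; rw [← Set.ncard_coe_finset, cMf]
  have cN : (Nf : Set E) = N := by simp [hNf]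
  have hends : ∀ e, ∃ p : V × V, G.inc e = s(p.1, p.2) ∧
      ∀ i, e ∈ Mf i → part p.1 = some i ∧ part p.2 = none := by
    intro e
    by_cases h : ∃ i, e ∈ Mf i
    · obtain ⟨i, hi⟩ := h
      obtain ⟨u, v, huv, h1, h2⟩ := (mM i e).1 hi
      refine ⟨(u, v), huv, ?_⟩
      intro j hj
      obtain ⟨u', v', huv', h1', h2'⟩ := (mM j e).1 hj
      rw [huv] at huv'
      rcases Sym2.eq_iff.1 huv' with ⟨rfl, rfl⟩ | ⟨rfl, rfl⟩
      · exact ⟨h1', h2'⟩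
      · rw [h2] at h1'; cases h1'
    · induction he : G.inc e using Sym2.ind with | _ u v =>
      exact ⟨(u, v), rfl, fun i hi => absurd ⟨i, hi⟩ h⟩
  choose p hp1 hp2 using hends
  have vinc : ∀ e v, v ∈ G.inc e ↔ v = (p e).1 ∨ v = (p e).2 := by
    intro e v; rw [hp1 e, Sym2.mem_iff]
  have hb : ∀ e u v i, u ∈ G.inc e → v ∈ G.inc e → part u = some i →
      part v = some i ∨ e ∈ Mf i := by
    intro e u v i hu hv hpu
    by_cases huv : u = v
    · left; rw [← huv, hpu]
    have he : G.inc e = s(u, v) := ((Sym2.mem_and_mem_iff huv).1 ⟨hu, hv⟩)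
    rcases hpv : part v with _ | j
    · right; exact (mM i e).2 ⟨u, v, he, hpu, hpv⟩
    · left
      by_contra hij
      have := hbetween i j (fun h => hij (by rw [h]))
      have h2 : e ∈ G.edgesBetween (part ⁻¹' {some i}) (part ⁻¹' {some j}) := ⟨u, v, he, hpu, hpv⟩
      rw [this] at h2; exact h2
  have htouch : ∀ i e v, v ∈ G.inc e → v ∈ Cf i → e ∈ Sf i ∨ e ∈ Mf i := by
    intro i e v hv hvC
    rw [mC] at hvC
    by_cases h : e ∈ Mf i
    · exact Or.inr h
    · left; rw [mS]; intro u hu; exact (hb e v u i hv hu hvC).resolve_right h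
  have hinj : ∀ i, Set.InjOn (fun e => (p e).1) (Mf i) := by
    intro i e he f hf hef
    have heM : e ∈ M := by rw [hM]; exact Set.mem_iUnion.2 ⟨i, by rw [← cMf]; exact he⟩
    have hfM : f ∈ M := by rw [hM]; exact Set.mem_iUnion.2 ⟨i, by rw [← cMf]; exact hf⟩
    obtain ⟨w, hw, h⟩ := hstar e heM
    have hrefl : ∀ g, G.EdgeConn M g g := fun g =>
      ⟨(p g).1, (p g).1, (vinc _ _).2 (Or.inl rfl), (vinc _ _).2 (Or.inl rfl), Relation.ReflTransGen.refl⟩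
    have hef' : G.EdgeConn M e f := ⟨(p e).1, (p e).1, (vinc _ _).2 (Or.inl rfl),
      (vinc _ _).2 (Or.inl hef), Relation.ReflTransGen.refl⟩
    have hwp : part w = none := hw
    have hloc : ∀ g ∈ Mf i, w ∈ G.inc g → w = (p g).2 := by
      intro g hg hwg
      refine ((vinc _ _).1 hwg).resolve_left ?_
      rintro rfl
      rw [(hp2 g i hg).1] at hwp; cases hwp
    have h1 := hloc e he (h e heM (hrefl e)).1
    have h2 := hloc f hf (h f hfM hef').1
    refine (h f hfM hef').2.2 e heM (hrefl e) ?_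
    rw [hp1 e, hp1 f, ← h1, ← h2]
    change (p e).1 = (p f).1 at hef
    rw [hef]
  have hWeq : G.edgesWithin U = ⋃ i, (Sf i : Set E) := by
    ext e
    simp only [Set.mem_iUnion, mem_coe]
    have hUm : ∀ v, v ∈ U ↔ ∃ i, part v = some i := by intro v; rw [hU]; simp
    constructor
    · intro he
      obtain ⟨i, hi⟩ := (hUm _).1 (he (p e).1 ((vinc _ _).2 (Or.inl rfl)))
      refine ⟨i, (mS i e).2 ?_⟩
      intro v hv
      refine (hb e _ v i ((vinc _ _).2 (Or.inl rfl)) hv hi).resolve_right ?_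
      intro hm
      obtain ⟨j, hj⟩ := (hUm _).1 (he (p e).2 ((vinc _ _).2 (Or.inr rfl)))
      rw [(hp2 e i hm).2] at hj; cases hj
    · rintro ⟨i, hi⟩ v hv
      exact (hUm v).2 ⟨i, (mS i e).1 hi v hv⟩
  have fst_mem : ∀ e, (p e).1 ∈ G.inc e := fun e => (vinc _ _).2 (Or.inl rfl)
  have snd_mem : ∀ e, (p e).2 ∈ G.inc e := fun e => (vinc _ _).2 (Or.inr rfl)
  have hNS : ∀ i, Disjoint Nf (Sf i) := by
    intro i; rw [disjoint_left]; intro e h1 h2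
    have := (mS i e).1 h2 _ (fst_mem e)
    rw [mN e h1 _ (fst_mem e)] at this; cases this
  have hSM : ∀ i j, Disjoint (Sf i) (Mf j) := by
    intro i j; rw [disjoint_left]; intro e h1 h2
    have := (mS i e).1 h1 _ (snd_mem e)
    rw [(hp2 e j h2).2] at this; cases this
  -- the classes of the contraction
  have hcls : ∀ i v, Quotient.mk (G.contractSetoid (G.edgesWithin U)) (rep i) =
      Quotient.mk (G.contractSetoid (G.edgesWithin U)) v ↔ part v = some i := by
    intro i v
    have hri : part (rep i) = some i := hrep i
    constructor
    · intro h
      have hle : G.contractSetoid (G.edgesWithin U) ≤ Setoid.ker part := by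
        rw [gen_le]
        intro e he u v huv
        rw [hWeq] at he
        obtain ⟨j, hj⟩ := Set.mem_iUnion.1 he
        have hj := (mS j e).1 hj
        change part u = part v
        rw [hj u (by rw [huv]; simp), hj v (by rw [huv]; simp)]
      have : part (rep i) = part v := hle (Quotient.exact h)
      rw [← this, hri]
    · intro h
      by_cases hrv : rep i = v
      · rw [hrv]
      obtain ⟨e, he, _⟩ := (hclique i).1 (rep i) hri v h hrv
      apply Quotient.sound
      refine G.gen_rel (e := e) ?_ he
      rw [hWeq]
      refine Set.mem_iUnion.2 ⟨i, (mS i e).2 ?_⟩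
      intro x hx
      rw [he, Sym2.mem_iff] at hx
      rcases hx with rfl | rfl
      · exact hri
      · exact h
  have hMU : M = ⋃ i, (Mf i : Set E) := by rw [hM]; simp only [cMf]
  simp only [cC, cM]
  rw [hMU, ← cN, tau_eq G Cf Sf Mf Nf,
    main_ind G Cf Sf Mf Nf (fun e => (p e).1) (fun e => (p e).2) ?_ ?_ ?_ ?_ ?_ ?_ hinj htouch ?_ hSM
      ?_ ?_ hNS ?_ univ]
  · congr 1
    symm
    refine rhs_eq G Cf Sf Mf Nf (G.edgesWithin U) hWeq hNS _ ?_
    intro X hX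
    apply prod_congr rfl
    intro i _
    congr 1
    rw [← Set.ncard_coe_finset]
    refine Set.ncard_congr (fun e _ => e.1) ?_ ?_ ?_
    · rintro e ⟨h1, h2⟩
      refine mem_coe.2 (mem_inter.2 ⟨h1, ?_⟩)
      change _ ∈ (G.inc e.1).map _ at h2
      obtain ⟨v, hv, hv2⟩ := Sym2.mem_map.1 h2
      have hpv := (hcls i v).1 hv2.symm
      refine (htouch i e.1 v hv ((mC i v).2 hpv)).resolve_left ?_
      intro h
      apply e.2
      exact (Set.ext_iff.1 hWeq e.1).2 (Set.mem_iUnion.2 ⟨i, h⟩)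
    · intro e f _ _ h; exact Subtype.ext h
    · intro e he
      obtain ⟨h1, h2⟩ := mem_inter.1 (mem_coe.1 he)
      refine ⟨⟨e, Set.disjoint_left.1 hX h1⟩, ⟨h1, ?_⟩, rfl⟩
      change _ ∈ (G.inc e).map _
      exact Sym2.mem_map.2 ⟨(p e).1, fst_mem e, ((hcls i _).2 (hp2 e i h2).1).symm⟩
  · intro i; exact ⟨rep i, (mC i _).2 (hrep i)⟩
  · intro i e; rw [mS]; simp only [mC]
  · intro i u hu v hv huv
    exact (hclique i).1 u ((mC i u).1 hu) v ((mC i v).1 hv) huv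
  · intro i e _; exact hp1 e
  · intro i e he; exact (mC _ _).2 (hp2 e i he).1
  · intro i e he h
    rw [mC, (hp2 e i he).2] at h; cases h
  · intro i j hij; rw [disjoint_left]; intro v h1 h2
    rw [mC] at h1 h2
    exact hij (Option.some.inj (h1.symm.trans h2))
  · intro i j hij; rw [disjoint_left]; intro e h1 h2
    exact hij (Option.some.inj (((mS i e).1 h1 _ (fst_mem e)).symm.trans ((mS j e).1 h2 _ (fst_mem e))))
  · intro i j hij; rw [disjoint_left]; intro e h1 h2
    exact hij (Option.some.inj ((hp2 e i h1).1.symm.trans (hp2 e j h2).1))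
  · intro i; rw [disjoint_left]; intro e h1 h2
    have := (hp2 e i h2).1
    rw [mN e h1 _ (fst_mem e)] at this; cases this

end helpers
end Multigraph

open Multigraph

/-- with the vertex set partitioned into `V₀` (`= part ⁻¹' {none}`)
and cliques `V₁, …, V_k` (`Vᵢ = part ⁻¹' {some i}`), no edges between distinct
cliques, and every component of `G[M]` a star with center in `V₀`, for any
`N ⊆ E(G[V₀])`:
`τ_G(M ∪ N) = ∏ᵢ |Vᵢ|^{|Vᵢ|−2−|Mᵢ|} · Σ_{T ∈ ST_{G•U}(N)} ∏ᵢ |Vᵢ|^{|E_T(vᵢ)|}`. -/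
theorem tau_contract_cliques {V : Type u} {E : Type v} [Fintype V] [Fintype E]
    (G : Multigraph V E) (hconn : G.Connected) (hloop : G.Loopless)
    (k : ℕ) (part : V → Option (Fin k))
    (hne : ∀ i : Option (Fin k), (part ⁻¹' {i}).Nonempty)
    (hclique : ∀ i : Fin k, G.IsClique (part ⁻¹' {some i}))
    (hbetween : ∀ i j : Fin k, i ≠ j →
      G.edgesBetween (part ⁻¹' {some i}) (part ⁻¹' {some j}) = ∅)
    (Mi : Fin k → Set E)
    (hMi : ∀ i, Mi i = G.edgesBetween (part ⁻¹' {some i}) (part ⁻¹' {none}))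
    (M : Set E) (hM : M = ⋃ i, Mi i)
    (hstar : G.StarComponents M (part ⁻¹' {none}))
    (U : Set V) (hU : U = ⋃ i, part ⁻¹' {some i})
    (rep : Fin k → V) (hrep : ∀ i, rep i ∈ part ⁻¹' {some i})
    (N : Set E) (hN : N ⊆ G.edgesWithin (part ⁻¹' {none})) :
    (G.tau (M ∪ N) : ℚ) =
      (∏ i, ((part ⁻¹' {some i}).ncard : ℚ) ^
        (((part ⁻¹' {some i}).ncard : ℤ) - 2 - ((Mi i).ncard : ℤ))) *
      ∑ᶠ T ∈ (G.contract (G.edgesWithin U)).ST (Subtype.val ⁻¹' N),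
        ∏ i, ((part ⁻¹' {some i}).ncard : ℚ) ^
          ({e ∈ T | Quotient.mk (G.contractSetoid (G.edgesWithin U)) (rep i) ∈
            (G.contract (G.edgesWithin U)).inc e}).ncard := by
  exact final G k part hne hclique hbetween Mi hMi M hM hstar U hU rep hrep N hN

end PaperST
end

section
/- Let G be a connected multigraph and G_0 a subgraph of G. Let G◇G_0 be the graph obtained from G by applying, for every vertex v of G_0 with E_G(v) ≠ E_{G_0}(v), the splitting operation G_{v◁E_0} with E_0 = E_{G_0}(v): this adds a new vertex v' and a new edge vv', and reroutes every edge of E_G(v) − E_0 from v to v'. Let M = E(G◇G_0) − E(G). Then for any N ⊆ E(G), τ_G(N) = τ_{G◇G_0}(M ∪ N). -/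
/-!
Spanning trees of multigraphs: common definitions.

A multigraph on a vertex type `V` with edge type `E` is given by an incidence
map `inc : E → Sym2 V` sending each edge to its (unordered) pair of endpoints.
-/

namespace PaperST

universe u v

open Multigraph

/-- The vertices of the subgraph `G₀ = (V₀, E₀)` at which `G` is split when
forming `G ◇ G₀`: those `v ∈ V₀` with `E_G(v) ≠ E_{G₀}(v)`. -/
def Multigraph.splitSet {V : Type u} {E : Type v} (G : Multigraph V E)
    (V₀ : Set V) (E₀ : Set E) : Set V :=
  {v | v ∈ V₀ ∧ {e : E | v ∈ G.inc e} ≠ {e ∈ E₀ | v ∈ G.inc e}}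

open Classical in
/-- The graph `G ◇ G₀` for a subgraph `G₀ = (V₀, E₀)` of `G`: for every vertex
`v ∈ V₀` with `E_G(v) ≠ E_{G₀}(v)`, a new vertex `v'` and a new edge `v v'` are
added, and every edge of `E_G(v) − E₀` is rerouted from `v` to `v'`. -/
noncomputable def Multigraph.diamond {V : Type u} {E : Type v} (G : Multigraph V E)
    (V₀ : Set V) (E₀ : Set E) :
    Multigraph (V ⊕ ↥(G.splitSet V₀ E₀)) (E ⊕ ↥(G.splitSet V₀ E₀)) :=
  ⟨Sum.elim
    (fun e => (G.inc e).map (fun v =>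
      if h : v ∈ G.splitSet V₀ E₀ ∧ e ∉ E₀ then Sum.inr ⟨v, h.1⟩ else Sum.inl v))
    (fun v => s(Sum.inl v.val, Sum.inr v))⟩

theorem diamond_step_proj {V : Type u} {E : Type v} (G : Multigraph V E)
    (V₀ : Set V) (E₀ : Set E) (T : Set E) (a b : V ⊕ ↥(G.splitSet V₀ E₀))
    (h : (G.diamond V₀ E₀).Step (Sum.inl '' T ∪ Set.range Sum.inr) a b) :
    G.Reach T (Sum.elim id Subtype.val a) (Sum.elim id Subtype.val b) := by
  obtain ⟨e, he, hinc⟩ := h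
  rcases e with e | w
  · have heT : e ∈ T := by simpa using he
    refine Relation.ReflTransGen.single ⟨e, heT, ?_⟩
    have h2 := congrArg (Sym2.map (Sum.elim id Subtype.val)) hinc
    simp only [Multigraph.diamond, Sum.elim_inl, Sym2.map_map, Sym2.map_mk] at h2
    rw [← h2]
    refine (congrFun (Sym2.map_id (α := V)) (G.inc e)).symm.trans ?_
    congr 1
    funext v
    simp only [Function.comp, id]
    split_ifs <;> rfl
  · simp only [Multigraph.diamond, Sum.elim_inr, Sym2.eq_iff] at hinc
    rcases hinc with ⟨rfl, rfl⟩ | ⟨rfl, rfl⟩ <;> exact Relation.ReflTransGen.refl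

theorem reach_symm {V : Type u} {E : Type v} (G : Multigraph V E) (T : Set E) {a b : V}
    (h : G.Reach T a b) : G.Reach T b a :=
  (G.contractSetoid T).symm h

theorem diamond_reach_inl {V : Type u} {E : Type v} (G : Multigraph V E)
    (V₀ : Set V) (E₀ : Set E) (T : Set E) (a : V ⊕ ↥(G.splitSet V₀ E₀)) :
    (G.diamond V₀ E₀).Reach (Sum.inl '' T ∪ Set.range Sum.inr)
      (Sum.inl (Sum.elim id Subtype.val a)) a := by
  rcases a with a | a
  · exact Relation.ReflTransGen.refl
  · exact Relation.ReflTransGen.single ⟨Sum.inr a, Or.inr ⟨a, rfl⟩, rfl⟩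

theorem diamond_step_lift {V : Type u} {E : Type v} (G : Multigraph V E)
    (V₀ : Set V) (E₀ : Set E) (T : Set E) (a b : V) (h : G.Step T a b) :
    (G.diamond V₀ E₀).Reach (Sum.inl '' T ∪ Set.range Sum.inr) (Sum.inl a) (Sum.inl b) := by
  classical
  obtain ⟨e, he, hinc⟩ := h
  let f : V → V ⊕ ↥(G.splitSet V₀ E₀) := fun v =>
    if h : v ∈ G.splitSet V₀ E₀ ∧ e ∉ E₀ then Sum.inr ⟨v, h.1⟩ else Sum.inl v
  have hf : ∀ v, Sum.elim id Subtype.val (f v) = v := by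
    intro v
    simp only [f]
    split_ifs <;> rfl
  have hs : (G.diamond V₀ E₀).Step (Sum.inl '' T ∪ Set.range Sum.inr) (f a) (f b) := by
    refine ⟨Sum.inl e, Or.inl ⟨e, he, rfl⟩, ?_⟩
    simp only [Multigraph.diamond, Sum.elim_inl, hinc, Sym2.map_mk, f]
  have h1 := diamond_reach_inl G V₀ E₀ T (f a)
  have h2 := diamond_reach_inl G V₀ E₀ T (f b)
  rw [hf] at h1 h2
  exact h1.trans ((Relation.ReflTransGen.single hs).trans (reach_symm _ _ h2))

theorem diamond_connectedOn {V : Type u} {E : Type v} (G : Multigraph V E)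
    (V₀ : Set V) (E₀ : Set E) (T : Set E) :
    (G.diamond V₀ E₀).ConnectedOn (Sum.inl '' T ∪ Set.range Sum.inr) ↔ G.ConnectedOn T := by
  constructor
  · intro h u v
    have key : ∀ a b, (G.diamond V₀ E₀).Reach (Sum.inl '' T ∪ Set.range Sum.inr) a b →
        G.Reach T (Sum.elim id Subtype.val a) (Sum.elim id Subtype.val b) := by
      intro a b hab
      induction hab with
      | refl => exact Relation.ReflTransGen.refl
      | tail _ hs ih => exact ih.trans (diamond_step_proj G V₀ E₀ T _ _ hs)
    exact key _ _ (h (Sum.inl u) (Sum.inl v))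
  · intro h a b
    have key : ∀ u v, G.Reach T u v →
        (G.diamond V₀ E₀).Reach (Sum.inl '' T ∪ Set.range Sum.inr) (Sum.inl u) (Sum.inl v) := by
      intro u v huv
      induction huv with
      | refl => exact Relation.ReflTransGen.refl
      | tail _ hs ih => exact ih.trans (diamond_step_lift G V₀ E₀ T _ _ hs)
    exact (reach_symm _ _ (diamond_reach_inl G V₀ E₀ T a)).trans
      ((key _ _ (h _ _)).trans (diamond_reach_inl G V₀ E₀ T b))

theorem diamond_isSpanningTree {V : Type u} {E : Type v} [Fintype V] [Fintype E]
    (G : Multigraph V E) (V₀ : Set V) (E₀ : Set E) (T : Set E) :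
    (G.diamond V₀ E₀).IsSpanningTree (Sum.inl '' T ∪ Set.range Sum.inr) ↔
      G.IsSpanningTree T := by
  unfold Multigraph.IsSpanningTree
  rw [diamond_connectedOn]
  have h1 : (Sum.inl '' T ∪ Set.range Sum.inr : Set (E ⊕ ↥(G.splitSet V₀ E₀))).ncard =
      T.ncard + Nat.card ↥(G.splitSet V₀ E₀) := by
    rw [Set.ncard_union_eq _ (Set.toFinite _) (Set.toFinite _),
      Set.ncard_image_of_injective _ Sum.inl_injective, ← Set.image_univ,
      Set.ncard_image_of_injective _ Sum.inr_injective, Set.ncard_univ]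
    rw [Set.disjoint_left]
    rintro _ ⟨x, _, rfl⟩ ⟨y, hy⟩
    cases hy
  rw [h1, Nat.card_sum]
  constructor <;> rintro ⟨h, h'⟩ <;> exact ⟨h, by omega⟩

/-- `τ_G(N) = τ_{G◇G₀}(M ∪ N)` where
`M = E(G◇G₀) − E(G)` is the set of newly added edges. -/
theorem tau_diamond {V : Type u} {E : Type v} [Fintype V] [Fintype E]
    (G : Multigraph V E) (hconn : G.Connected)
    (V₀ : Set V) (E₀ : Set E)
    (hsub : ∀ e ∈ E₀, ∀ v ∈ G.inc e, v ∈ V₀)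
    (N : Set E) :
    G.tau N = (G.diamond V₀ E₀).tau (Set.range Sum.inr ∪ Sum.inl '' N) := by
  have hinj : Function.Injective (fun T : Set E =>
      (Sum.inl '' T ∪ Set.range Sum.inr : Set (E ⊕ ↥(G.splitSet V₀ E₀)))) := by
    intro T T' h
    ext e
    have := Set.ext_iff.1 h (Sum.inl e)
    simpa using this
  unfold Multigraph.tau
  rw [← Set.ncard_image_of_injective _ hinj]
  congr 1
  ext T
  constructor
  · rintro ⟨T, ⟨hT, hN⟩, rfl⟩
    refine ⟨(diamond_isSpanningTree G V₀ E₀ T).2 hT, ?_⟩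
    exact Set.union_subset Set.subset_union_right
      ((Set.image_mono hN).trans Set.subset_union_left)
  · rintro ⟨hT, hN⟩
    have hE : Sum.inl '' (Sum.inl ⁻¹' T) ∪ Set.range Sum.inr = T := by
      ext x
      rcases x with x | x
      · simp
      · simpa using hN (Or.inl ⟨x, rfl⟩)
    refine ⟨Sum.inl ⁻¹' T, ⟨?_, ?_⟩, hE⟩
    · rw [← hE] at hT
      exact (diamond_isSpanningTree G V₀ E₀ _).1 hT
    · intro e he
      exact hN (Or.inr ⟨e, he, rfl⟩)

end PaperST
end
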